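/- arXiv:1103.5305 — 2 statements merged into one kernel-verified Lean document; each statement's English description precedes it below -/
import Mathlib

section
/- Let θ : ℝ → ℝ be smooth and let R ∈ (0,∞). Assume Hypothesis (H_R) holds. Then θ is real analytic on ℝ, and for every integer n ≥ 1 and every x ∈ ℝ one has 𝒟_n^{θ,g_R}(x) ≥ 0. -/
noncomputable section

/-- `g_R(t) = -(R/π)·log(1 - (π/R)·t)`. -/
def gR (R t : ℝ) : ℝ := -(R / Real.pi) * Real.log (1 - (Real.pi / R) * t)

/-- `f` is a (smooth) solution of `f'' + θ·f = 0`. -/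
def IsSolution (θ f : ℝ → ℝ) : Prop :=
  ContDiff ℝ (⊤ : ℕ∞) f ∧ ∀ t, deriv (deriv f) t + θ t * f t = 0

/-- `f₁, f₂` is the fundamental pair of solutions of `f'' + θ·f = 0` at `x`:
`f₁(x) = f₂'(x) = 1`, `f₂(x) = f₁'(x) = 0`. -/
def IsFundPair (θ : ℝ → ℝ) (x : ℝ) (f₁ f₂ : ℝ → ℝ) : Prop :=
  IsSolution θ f₁ ∧ IsSolution θ f₂ ∧
  f₁ x = 1 ∧ deriv f₁ x = 0 ∧ f₂ x = 0 ∧ deriv f₂ x = 1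

/-- The `n`-th `g_R`-Schwarzian `𝒮_n^{θ,g_R}(x)`, computed from the fundamental pair
`f₁, f₂` at `x`: the `n`-th derivative at `t = 0` of `t ↦ h_x(x + g_R(t))`,
where `h_x = f₂/f₁`. -/
def SchR (R x : ℝ) (f₁ f₂ : ℝ → ℝ) (n : ℕ) : ℝ :=
  iteratedDeriv n (fun t => f₂ (x + gR R t) / f₁ (x + gR R t)) 0

/-- The determinant `𝒟_n^{θ,g_R}(x)` of the `n×n` Hankel matrix with `(i,j)` entry
`𝒮_{i+j-1}^{θ,g_R}(x)/(i+j-1)!`. -/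
def DetR (R x : ℝ) (f₁ f₂ : ℝ → ℝ) (n : ℕ) : ℝ :=
  (Matrix.of fun i j : Fin n =>
    SchR R x f₁ f₂ (i.1 + j.1 + 1) / (Nat.factorial (i.1 + j.1 + 1) : ℝ)).det

/-- Hypothesis (H_R): `f₁, f₂` are linearly independent solutions of `f'' + θ·f = 0`
(constant Wronskian `W = f₁f₂' - f₁'f₂ ≠ 0`) and `h = f₂/f₁` admits a meromorphic
extension `H` to the strip `{|Im z| < R}` (holomorphic off the real zeros of `f₁`,
with poles at those zeros) which satisfies `W·Im H(z)·Im z > 0` for `0 < Im z < R`. -/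
def HypR (θ : ℝ → ℝ) (R : ℝ) : Prop :=
  ∃ (f₁ f₂ : ℝ → ℝ) (H : ℂ → ℂ),
    IsSolution θ f₁ ∧ IsSolution θ f₂ ∧
    f₁ 0 * deriv f₂ 0 - deriv f₁ 0 * f₂ 0 ≠ 0 ∧
    (∀ t : ℝ, f₁ t ≠ 0 → H t = ((f₂ t / f₁ t : ℝ) : ℂ)) ∧
    DifferentiableOn ℂ H
      {z : ℂ | |z.im| < R ∧ ∀ t : ℝ, f₁ t = 0 → z ≠ (t : ℂ)} ∧
    (∀ t : ℝ, f₁ t = 0 →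
      Filter.Tendsto (fun z => ‖H z‖) (nhdsWithin (t : ℂ) {(t : ℂ)}ᶜ) Filter.atTop) ∧
    (∀ z : ℂ, 0 < z.im → z.im < R →
      0 < (f₁ 0 * deriv f₂ 0 - deriv f₁ 0 * f₂ 0) * (H z).im * z.im)

/-- `(i,j)` entry (1-based, clamped to ℕ) of the matrix `T(f,n)(t)`:
`f^{(j-i)}(t)/(j-i)!` if `i ≤ j`, and `0` otherwise. -/
def Tentry (f : ℝ → ℝ) (t : ℝ) (i j : ℕ) : ℝ :=
  if i ≤ j then iteratedDeriv (j - i) f t / (Nat.factorial (j - i) : ℝ) else 0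

end

noncomputable section

open MeasureTheory Filter
open scoped Topology

def arcU (M : ℝ) (ψ : ℝ) : ℂ := -(M : ℂ) * Complex.exp (-(Complex.I * ψ))

theorem arcU_hasDerivAt (M ψ : ℝ) : HasDerivAt (arcU M) (-Complex.I * arcU M ψ) ψ := by
  have h1 : HasDerivAt (fun z : ℂ => -(M : ℂ) * Complex.exp (-(Complex.I * z)))
      (-(M : ℂ) * (Complex.exp (-(Complex.I * ψ)) * (-(Complex.I * 1)))) (ψ : ℂ) :=
    (((hasDerivAt_id (ψ : ℂ)).const_mul Complex.I).neg.cexp).const_mul _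
  have h2 := h1.comp_ofReal
  exact h2.congr_deriv (by simp only [arcU]; ring)

theorem arcU_cont (M : ℝ) : Continuous (arcU M) := by
  unfold arcU; fun_prop

theorem arcU_norm (M : ℝ) (hM : 0 < M) (ψ : ℝ) : ‖arcU M ψ‖ = M := by
  simp [arcU, Complex.norm_exp, abs_of_pos hM]

theorem arcU_im (M ψ : ℝ) : (arcU M ψ).im = M * Real.sin ψ := by
  have : arcU M ψ = -(M : ℂ) * Complex.exp (((-ψ : ℝ) : ℂ) * Complex.I) := by
    simp only [arcU]; congr 2; push_cast; ring
  rw [this, Complex.exp_ofReal_mul_I]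
  simp [Complex.sin_ofReal_re]

theorem arcU_zero (M : ℝ) : arcU M 0 = ((-M : ℝ) : ℂ) := by simp [arcU]

theorem arcU_pi (M : ℝ) : arcU M Real.pi = (M : ℂ) := by
  have : (-(Complex.I * (Real.pi : ℂ))) = -(Real.pi * Complex.I) := by ring
  simp [arcU, this, Complex.exp_neg]

theorem halfdisc (K : ℂ → ℂ) (ε M : ℝ) (hε : 0 < ε) (hM : 0 < M)
    (hK : DifferentiableOn ℂ K {z | -ε < z.im}) :
    ∫ ψ in (0:ℝ)..Real.pi, K (arcU M ψ) * (-Complex.I * arcU M ψ) = ∫ x in (-M)..M, K (x : ℂ) := by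
  set k : ℝ := M ^ 2 / ε with hk
  have hkε : k * ε = M ^ 2 := by rw [hk]; field_simp
  have hk0 : 0 < k := by positivity
  have hsub : Metric.ball (k * Complex.I) (k + ε / 2) ⊆ {z : ℂ | -ε < z.im} := by
    intro z hz
    rw [Metric.mem_ball, dist_eq_norm] at hz
    have h1 := (abs_le.1 (Complex.abs_im_le_norm (z - k * Complex.I))).1
    simp at h1
    change -ε < z.im; linarith
  have hmem : ∀ w : ℂ, 0 ≤ w.im → ‖w‖ ≤ M → w ∈ Metric.ball (k * Complex.I) (k + ε / 2) := by
    intro w h1 h2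
    rw [Metric.mem_ball, dist_eq_norm]
    apply lt_of_pow_lt_pow_left₀ 2 (by positivity)
    have h3 : ‖w‖ ^ 2 ≤ M ^ 2 := by gcongr
    rw [Complex.sq_norm, Complex.normSq_apply] at *
    simp
    nlinarith [mul_nonneg hk0.le h1]
  obtain ⟨G, hG⟩ := (hK.mono hsub).isExactOn_ball
  have hKc : ContinuousOn K (Metric.ball (k * Complex.I) (k + ε / 2)) := (hK.mono hsub).continuousOn
  have hpi := Real.pi_pos
  have m1 : ∀ ψ ∈ Set.uIcc 0 Real.pi, arcU M ψ ∈ Metric.ball (k * Complex.I) (k + ε / 2) := by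
    intro ψ hψ
    rw [Set.uIcc_of_le hpi.le] at hψ
    refine hmem _ ?_ (arcU_norm M hM ψ).le
    rw [arcU_im]
    exact mul_nonneg hM.le (Real.sin_nonneg_of_nonneg_of_le_pi hψ.1 hψ.2)
  have m2 : ∀ x ∈ Set.uIcc (-M) M, (x : ℂ) ∈ Metric.ball (k * Complex.I) (k + ε / 2) := by
    intro x hx
    rw [Set.uIcc_of_le (by linarith)] at hx
    refine hmem _ (by simp) ?_
    simpa using abs_le.2 hx
  have e1 : ∫ ψ in (0:ℝ)..Real.pi, K (arcU M ψ) * (-Complex.I * arcU M ψ)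
      = G (arcU M Real.pi) - G (arcU M 0) := by
    apply intervalIntegral.integral_eq_sub_of_hasDerivAt (f := fun ψ => G (arcU M ψ))
    · intro ψ hψ
      exact (hG _ (m1 ψ hψ)).comp ψ (arcU_hasDerivAt M ψ)
    · apply ContinuousOn.intervalIntegrable
      refine ContinuousOn.mul (hKc.comp (arcU_cont M).continuousOn m1) ?_
      exact (continuous_const.mul (arcU_cont M)).continuousOn
  have e2 : ∫ x in (-M)..M, K (x : ℂ) = G ((M : ℝ) : ℂ) - G ((-M : ℝ) : ℂ) := by
    apply intervalIntegral.integral_eq_sub_of_hasDerivAt (f := fun x : ℝ => G (x : ℂ))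
    · intro x hx
      exact (hG _ (m2 x hx)).comp_ofReal
    · apply ContinuousOn.intervalIntegrable
      exact hKc.comp Complex.continuous_ofReal.continuousOn m2
  rw [e1, e2, arcU_zero, arcU_pi]

/-- derivative transfer -/
theorem iter_transfer (F : ℂ → ℂ) (f : ℝ → ℝ) (x : ℝ) (hF : AnalyticAt ℂ F x)
    (h : ∀ᶠ t : ℝ in 𝓝 x, F t = f t) (n : ℕ) :
    ∀ᶠ t : ℝ in 𝓝 x, iteratedDeriv n F t = (iteratedDeriv n f t : ℝ) := by
  have hF' : ∀ᶠ t : ℝ in 𝓝 x, AnalyticAt ℂ F t :=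
    Complex.continuous_ofReal.continuousAt.eventually hF.eventually_analyticAt
  induction n with
  | zero => simpa using h
  | succ n ih =>
    filter_upwards [ih.eventually_nhds, hF'] with t h1 h2
    rw [iteratedDeriv_succ, iteratedDeriv_succ]
    have d1 : HasDerivAt (iteratedDeriv n F) (deriv (iteratedDeriv n F) t) (t : ℂ) := by
      have : AnalyticAt ℂ (iteratedDeriv n F) t := by
        rw [iteratedDeriv_eq_iterate]; exact h2.iterated_deriv n
      exact this.differentiableAt.hasDerivAt
    have d2 := d1.real_of_complex
    have e : (fun s : ℝ => (iteratedDeriv n F s).re) =ᶠ[𝓝 t] iteratedDeriv n f := by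
      filter_upwards [h1] with s hs
      rw [hs, Complex.ofReal_re]
    have d3 := (d2.congr_of_eventuallyEq e.symm).deriv
    have d4 : HasDerivAt (fun s : ℝ => ((iteratedDeriv n f s : ℝ) : ℂ)) (deriv (iteratedDeriv n F) t) t :=
      d1.comp_ofReal.congr_of_eventuallyEq (h1.mono fun s hs => hs.symm)
    have d5 := (d2.congr_of_eventuallyEq e.symm).ofReal_comp
    rw [d3]
    exact d4.unique d5

theorem conj_symm (F : ℂ → ℂ) (r : ℝ) (hr : 0 < r) (hF : DifferentiableOn ℂ F (Metric.ball 0 r))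
    (hreal : ∀ᶠ t : ℝ in 𝓝 0, (F t).im = 0) :
    ∀ z ∈ Metric.ball (0 : ℂ) r, F ((starRingEnd ℂ) z) = (starRingEnd ℂ) (F z) := by
  set G : ℂ → ℂ := fun z => (starRingEnd ℂ) (F ((starRingEnd ℂ) z)) with hG
  have hGd : DifferentiableOn ℂ G (Metric.ball 0 r) := by
    intro z hz
    have hz' : (starRingEnd ℂ) z ∈ Metric.ball (0 : ℂ) r := by simpa using hz
    have h1 : DifferentiableAt ℂ F ((starRingEnd ℂ) z) :=
      hF.differentiableAt (Metric.isOpen_ball.mem_nhds hz')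
    have h2 := h1.conj_conj
    rw [Complex.conj_conj] at h2
    exact h2.differentiableWithinAt
  have hfreq : ∃ᶠ z in 𝓝[≠] (0 : ℂ), F z = G z := by
    have ht : Tendsto (fun t : ℝ => (t : ℂ)) (𝓝[≠] 0) (𝓝[≠] (0:ℂ)) := by
      apply tendsto_nhdsWithin_of_tendsto_nhds_of_eventually_within
      · have := Complex.continuous_ofReal.tendsto 0
        simp only [Complex.ofReal_zero] at this
        exact this.mono_left nhdsWithin_le_nhds
      · filter_upwards [self_mem_nhdsWithin] with t ht
        simpa using ht
    apply ht.frequently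
    apply Eventually.frequently
    filter_upwards [nhdsWithin_le_nhds hreal] with t ht
    have ht : (F t).im = 0 := ht
    simp only [hG, Complex.conj_ofReal]
    exact (Complex.conj_eq_iff_im.2 ht).symm
  have heq := (hF.analyticOnNhd Metric.isOpen_ball).eqOn_of_preconnected_of_frequently_eq
    (hGd.analyticOnNhd Metric.isOpen_ball) (convex_ball _ _).isPreconnected
    (Metric.mem_ball_self hr) hfreq
  intro z hz
  rw [heq hz]
  simp [hG]

theorem pick_hankel (F : ℂ → ℂ) (hF0 : AnalyticAt ℂ F 0)
    (hFd : DifferentiableOn ℂ F {z | 0 < z.im}) (hFi : ∀ z : ℂ, 0 < z.im → 0 ≤ (F z).im)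
    (hreal : ∀ᶠ t : ℝ in 𝓝 0, (F t).im = 0) (n : ℕ) (c : Fin n → ℝ) :
    0 ≤ ∑ i : Fin n, ∑ j : Fin n, c i * c j *
      ((iteratedDeriv (i.1 + j.1 + 1) F 0).re / (Nat.factorial (i.1 + j.1 + 1) : ℝ)) := by
  obtain ⟨r₀, hr₀, hA⟩ := hF0.exists_ball_analyticOnNhd
  have hsymm0 := conj_symm F r₀ hr₀ hA.differentiableOn hreal
  obtain ⟨r, hr, hrr⟩ : ∃ r, 0 < r ∧ r < r₀ := ⟨r₀ / 2, by linarith, by linarith⟩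
  have hsub : Metric.closedBall (0:ℂ) r ⊆ Metric.ball 0 r₀ := Metric.closedBall_subset_ball hrr
  have hFr : DifferentiableOn ℂ F (Metric.closedBall 0 r) := hA.differentiableOn.mono hsub
  have hFc := hFr.continuousOn
  set M : ℝ := r⁻¹ with hMdef
  have hM : 0 < M := by positivity
  set P : ℂ → ℂ := fun u => ∑ i : Fin n, (c i : ℂ) * (-u) ^ i.1 with hP
  have hPc : Continuous P := by rw [hP]; fun_prop
  have hPd : Differentiable ℂ P := by rw [hP]; fun_prop
  have hPreal : ∀ x : ℝ, P x = ((∑ i : Fin n, c i * (-x) ^ i.1 : ℝ) : ℂ) := by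
    intro x; simp [hP]
  have hpi := Real.pi_pos
  -- the approximating integrals
  set q : ℝ → ℝ → ℂ := fun ε ψ =>
    F (-(arcU M ψ + ε * Complex.I)⁻¹) * P (arcU M ψ) ^ 2 * (-Complex.I * arcU M ψ) with hq
  have him : ∀ ψ ∈ Set.Icc 0 Real.pi, 0 ≤ (arcU M ψ).im := by
    intro ψ hψ
    rw [arcU_im]
    exact mul_nonneg hM.le (Real.sin_nonneg_of_nonneg_of_le_pi hψ.1 hψ.2)
  have hnorm : ∀ ψ ∈ Set.Icc 0 Real.pi, ∀ ε : ℝ, 0 ≤ ε → M ≤ ‖arcU M ψ + ε * Complex.I‖ := by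
    intro ψ hψ ε hε
    have h1 := arcU_norm M hM ψ
    have h2 := him ψ hψ
    apply le_of_sq_le_sq _ (norm_nonneg _)
    have h3 : ‖arcU M ψ‖ ^ 2 = M ^ 2 := by rw [h1]
    rw [Complex.sq_norm, Complex.normSq_apply] at *
    simp
    nlinarith [mul_nonneg hε h2, mul_nonneg hε hε]
  have hmem : ∀ ψ ∈ Set.Icc 0 Real.pi, ∀ ε : ℝ, 0 ≤ ε →
      -(arcU M ψ + ε * Complex.I)⁻¹ ∈ Metric.closedBall (0:ℂ) r := by
    intro ψ hψ ε hε
    rw [mem_closedBall_zero_iff, norm_neg, norm_inv, inv_le_comm₀ (by linarith [hnorm ψ hψ ε hε]) hr]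
    exact hnorm ψ hψ ε hε
  have hne : ∀ ψ ∈ Set.Icc 0 Real.pi, ∀ ε : ℝ, 0 ≤ ε → arcU M ψ + ε * Complex.I ≠ 0 := by
    intro ψ hψ ε hε h
    have := hnorm ψ hψ ε hε
    rw [h, norm_zero] at this; linarith
  have hqpos : ∀ ε : ℝ, 0 < ε → 0 ≤ (∫ ψ in (0:ℝ)..Real.pi, q ε ψ).im := by
    intro ε hε
    have hdom : DifferentiableOn ℂ (fun z => F (-(z + ε * Complex.I)⁻¹) * P z ^ 2)
        {z | -ε < z.im} := by
      intro z hz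
      have hz : -ε < z.im := hz
      have hw : 0 < (z + ε * Complex.I).im := by simp; linarith
      have hw0 : z + ε * Complex.I ≠ 0 := by
        intro h; rw [h] at hw; simp at hw
      have hw1 : 0 < (-(z + ε * Complex.I)⁻¹).im := by
        rw [Complex.neg_im, Complex.inv_im, neg_div, neg_neg]
        exact div_pos hw (Complex.normSq_pos.2 hw0)
      have hd : DifferentiableAt ℂ F (-(z + ε * Complex.I)⁻¹) :=
        hFd.differentiableAt ((isOpen_lt continuous_const Complex.continuous_im).mem_nhds hw1)
      have hd2 : DifferentiableAt ℂ (fun z : ℂ => -(z + ε * Complex.I)⁻¹) z :=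
        
        ((differentiableAt_fun_id.add_const (ε * Complex.I)).fun_inv hw0).fun_neg
      exact ((hd.comp z hd2).mul ((hPd z).pow 2)).differentiableWithinAt
    have h1 := halfdisc _ ε M hε hM hdom
    have h2 : ∫ ψ in (0:ℝ)..Real.pi, q ε ψ
        = ∫ x in (-M)..M, F (-((x:ℂ) + ε * Complex.I)⁻¹) * P x ^ 2 := h1
    rw [h2]
    have hint : IntervalIntegrable (fun x : ℝ => F (-((x:ℂ) + ε * Complex.I)⁻¹) * P x ^ 2)
        volume (-M) M := by
      apply ContinuousOn.intervalIntegrable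
      refine hdom.continuousOn.comp Complex.continuous_ofReal.continuousOn ?_
      intro x _
      change -ε < ((x : ℂ)).im
      simpa using hε
    have h3 := intervalIntegral.intervalIntegral_im hint
    simp only [RCLike.im_eq_complex_im] at h3
    rw [← h3]
    apply intervalIntegral.integral_nonneg (by linarith)
    intro x _
    rw [hPreal, ← Complex.ofReal_pow, Complex.im_mul_ofReal]
    refine mul_nonneg (hFi _ ?_) (sq_nonneg _)
    have hw : 0 < ((x:ℂ) + ε * Complex.I).im := by simpa using hε
    rw [Complex.neg_im, Complex.inv_im, neg_div, neg_neg]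
    refine div_pos hw (Complex.normSq_pos.2 ?_)
    intro h; rw [h] at hw; simp at hw
  have hqc : ∀ ε : ℝ, 0 ≤ ε → ContinuousOn (q ε) (Set.Icc 0 Real.pi) := by
    intro ε hε
    have hu := (arcU_cont M)
    refine ContinuousOn.mul (ContinuousOn.mul ?_ ?_) ?_
    · refine hFc.comp ?_ (fun ψ hψ => hmem ψ hψ ε hε)
      refine ContinuousOn.neg (ContinuousOn.inv₀ ?_ (fun ψ hψ => hne ψ hψ ε hε))
      fun_prop
    · fun_prop
    · fun_prop
  have htend : Tendsto (fun ε => ∫ ψ in (0:ℝ)..Real.pi, q ε ψ) (𝓝[>] 0)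
      (𝓝 (∫ ψ in (0:ℝ)..Real.pi, q 0 ψ)) := by
    obtain ⟨C, hC⟩ := (isCompact_closedBall (0:ℂ) r).exists_bound_of_continuousOn hFc
    have hIoc : ∀ ψ, ψ ∈ Set.uIoc 0 Real.pi → ψ ∈ Set.Icc 0 Real.pi := by
      intro ψ hψ
      rw [Set.uIoc_of_le hpi.le] at hψ
      exact Set.Ioc_subset_Icc_self hψ
    apply intervalIntegral.tendsto_integral_filter_of_dominated_convergence
      (bound := fun ψ => C * ‖P (arcU M ψ) ^ 2 * (-Complex.I * arcU M ψ)‖)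
    · filter_upwards [self_mem_nhdsWithin] with ε hε
      exact ((hqc ε (le_of_lt hε)).mono hIoc).aestronglyMeasurable measurableSet_uIoc
    · filter_upwards [self_mem_nhdsWithin] with ε hε
      refine ae_of_all _ fun ψ hψ => ?_
      simp only [hq]
      rw [mul_assoc, norm_mul]
      exact mul_le_mul_of_nonneg_right (hC _ (hmem ψ (hIoc ψ hψ) ε (le_of_lt hε))) (norm_nonneg _)
    · apply Continuous.intervalIntegrable
      have hu := (arcU_cont M)
      fun_prop
    · refine ae_of_all _ fun ψ hψ => ?_
      have hψ' := hIoc ψ hψ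
      simp only [hq]
      refine Tendsto.mul (Tendsto.mul ?_ tendsto_const_nhds) tendsto_const_nhds
      have h0 := hne ψ hψ' 0 le_rfl
      have hFa : ContinuousAt F (-(arcU M ψ + ((0:ℝ):ℂ) * Complex.I)⁻¹) :=
        (hA _ (hsub (hmem ψ hψ' 0 le_rfl))).continuousAt
      have hin : ContinuousAt (fun ε : ℝ => -(arcU M ψ + (ε:ℂ) * Complex.I)⁻¹) 0 := by
        refine ContinuousAt.neg (ContinuousAt.inv₀ ?_ h0)
        fun_prop
      exact (ContinuousAt.comp (f := fun ε : ℝ => -(arcU M ψ + (ε:ℂ) * Complex.I)⁻¹) hFa hin).tendsto.mono_left nhdsWithin_le_nhds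
  have hlim : 0 ≤ (∫ ψ in (0:ℝ)..Real.pi, q 0 ψ).im := by
    have := (Complex.continuous_im.tendsto _).comp htend
    refine ge_of_tendsto this ?_
    filter_upwards [self_mem_nhdsWithin] with ε hε
    exact hqpos ε hε
  -- full circle
  set Q : ℝ → ℂ := fun ψ => F (circleMap 0 r ψ) * P (-(circleMap 0 r ψ)⁻¹) ^ 2 *
    (Complex.I * (circleMap 0 r ψ)⁻¹) with hQ
  have harc : ∀ ψ, arcU M ψ = -(circleMap 0 r ψ)⁻¹ := by
    intro ψ
    simp only [arcU, circleMap, hMdef, zero_add, mul_inv, ← Complex.exp_neg]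
    push_cast
    rw [mul_comm (ψ : ℂ)]; ring
  have hqQ : q 0 = Q := by
    ext ψ
    simp only [hq, hQ, harc]
    simp
  rw [hqQ] at hlim
  have hcne : ∀ ψ, circleMap 0 r ψ ≠ 0 := fun ψ => circleMap_ne_center hr.ne'
  have hcmem : ∀ ψ, circleMap 0 r ψ ∈ Metric.closedBall (0:ℂ) r :=
    fun ψ => circleMap_mem_closedBall _ hr.le ψ
  have hQc : Continuous Q := by
    have h1 : Continuous (fun ψ => F (circleMap 0 r ψ)) :=
      hFc.comp_continuous (continuous_circleMap 0 r) hcmem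
    have h2 : Continuous (fun ψ => (circleMap 0 r ψ)⁻¹) := (continuous_circleMap 0 r).inv₀ hcne
    exact (h1.mul ((hPc.comp h2.neg).pow 2)).mul (continuous_const.mul h2)
  have hPconj : ∀ z, P ((starRingEnd ℂ) z) = (starRingEnd ℂ) (P z) := by
    intro z; simp [hP]
  have hQsymm : ∀ ψ, Q (2 * Real.pi - ψ) = -(starRingEnd ℂ) (Q ψ) := by
    intro ψ
    have hz : circleMap 0 r (2 * Real.pi - ψ) = (starRingEnd ℂ) (circleMap 0 r ψ) := by
      simp only [circleMap, zero_add, map_mul, Complex.conj_ofReal, ← Complex.exp_conj, Complex.conj_I]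
      congr 1
      push_cast
      rw [sub_mul, Complex.exp_sub, Complex.exp_two_pi_mul_I, mul_neg, Complex.exp_neg, one_div]
    simp only [hQ]
    rw [hz, hsymm0 _ (hsub (hcmem ψ))]
    have : -((starRingEnd ℂ) (circleMap 0 r ψ))⁻¹ = (starRingEnd ℂ) (-(circleMap 0 r ψ)⁻¹) := by simp
    rw [this, hPconj]
    simp
  have hfull : ∫ ψ in (0:ℝ)..(2 * Real.pi), Q ψ
      = 2 * Complex.I * ((∫ ψ in (0:ℝ)..Real.pi, Q ψ).im : ℝ) := by
    rw [← intervalIntegral.integral_add_adjacent_intervals (hQc.intervalIntegrable 0 Real.pi)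
      (hQc.intervalIntegrable _ _)]
    have h1 : ∫ ψ in Real.pi..(2 * Real.pi), Q ψ = ∫ ψ in (0:ℝ)..Real.pi, Q (2 * Real.pi - ψ) := by
      rw [intervalIntegral.integral_comp_sub_left]
      congr 1 <;> ring
    rw [h1]
    simp only [hQsymm]
    rw [intervalIntegral.integral_neg]
    have h2 : ∫ ψ in (0:ℝ)..Real.pi, (starRingEnd ℂ) (Q ψ)
        = (starRingEnd ℂ) (∫ ψ in (0:ℝ)..Real.pi, Q ψ) := by
      rw [intervalIntegral.integral_of_le hpi.le, intervalIntegral.integral_of_le hpi.le]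
      exact integral_conj
    rw [h2]
    apply Complex.ext <;> simp
    ring
  have hcirc : ∫ ψ in (0:ℝ)..(2 * Real.pi), Q ψ
      = ∑ i : Fin n, ∑ j : Fin n, (c i : ℂ) * c j *
        (2 * Real.pi * Complex.I / (Nat.factorial (i.1 + j.1 + 1) : ℂ)
          * iteratedDeriv (i.1 + j.1 + 1) F 0) := by
    have h1 : ∀ m : ℕ, ∫ ψ in (0:ℝ)..(2 * Real.pi), 
        F (circleMap 0 r ψ) * (circleMap 0 r ψ)⁻¹ ^ m * Complex.I
        = (2 * Real.pi * Complex.I / (Nat.factorial m : ℂ) * iteratedDeriv m F 0) := by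
      intro m
      have := hFr.circleIntegral_one_div_sub_center_pow_smul hr m
      simp only [circleIntegral, deriv_circleMap, smul_eq_mul, sub_zero] at this
      rw [← this]
      congr 1
      ext ψ
      have := hcne ψ
      rw [inv_pow]
      field_simp
      ring
    have h2 : ∀ ψ, Q ψ = ∑ i : Fin n, ∑ j : Fin n, (c i : ℂ) * c j *
        (F (circleMap 0 r ψ) * (circleMap 0 r ψ)⁻¹ ^ (i.1 + j.1 + 1) * Complex.I) := by
      intro ψ
      simp only [hQ, hP, neg_neg]
      rw [pow_two, Finset.sum_mul_sum, Finset.mul_sum, Finset.sum_mul]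
      refine Finset.sum_congr rfl fun i _ => ?_
      rw [Finset.mul_sum, Finset.sum_mul]
      refine Finset.sum_congr rfl fun j _ => ?_
      ring
    have h3 : ∀ m : ℕ, Continuous (fun ψ =>
        F (circleMap 0 r ψ) * (circleMap 0 r ψ)⁻¹ ^ m * Complex.I) := by
      intro m
      have h1 : Continuous (fun ψ => F (circleMap 0 r ψ)) :=
        hFc.comp_continuous (continuous_circleMap 0 r) hcmem
      have h2 : Continuous (fun ψ => (circleMap 0 r ψ)⁻¹) := (continuous_circleMap 0 r).inv₀ hcne
      exact (h1.mul (h2.pow m)).mul continuous_const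
    simp only [h2]
    rw [intervalIntegral.integral_finsetSum]
    · refine Finset.sum_congr rfl fun i _ => ?_
      rw [intervalIntegral.integral_finsetSum]
      · refine Finset.sum_congr rfl fun j _ => ?_
        rw [intervalIntegral.integral_const_mul, h1]
      · intro j _
        exact (continuous_const.mul (h3 _)).intervalIntegrable _ _
    · intro i _
      refine Continuous.intervalIntegrable ?_ _ _
      exact continuous_finsetSum _ fun j _ => (continuous_const.mul (h3 _))
  have hfin : (2 * Real.pi * Complex.I) * (∑ i : Fin n, ∑ j : Fin n, (c i : ℂ) * c j *
        (iteratedDeriv (i.1 + j.1 + 1) F 0 / (Nat.factorial (i.1 + j.1 + 1) : ℂ)))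
      = 2 * Complex.I * ((∫ ψ in (0:ℝ)..Real.pi, Q ψ).im : ℝ) := by
    rw [← hfull, hcirc, Finset.mul_sum]
    refine Finset.sum_congr rfl fun i _ => ?_
    rw [Finset.mul_sum]
    refine Finset.sum_congr rfl fun j _ => ?_
    ring
  have hfin2 : (∑ i : Fin n, ∑ j : Fin n, (c i : ℂ) * c j *
        (iteratedDeriv (i.1 + j.1 + 1) F 0 / (Nat.factorial (i.1 + j.1 + 1) : ℂ)))
      = (((∫ ψ in (0:ℝ)..Real.pi, Q ψ).im / Real.pi : ℝ) : ℂ) := by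
    have hI := Complex.I_ne_zero
    have hpC : (Real.pi : ℂ) ≠ 0 := by exact_mod_cast hpi.ne'
    push_cast
    rw [eq_div_iff hpC]
    apply mul_left_cancel₀ (mul_ne_zero two_ne_zero hI)
    linear_combination hfin
  have hre := congrArg Complex.re hfin2
  rw [Complex.ofReal_re] at hre
  have hlhs : (∑ i : Fin n, ∑ j : Fin n, (c i : ℂ) * c j *
        (iteratedDeriv (i.1 + j.1 + 1) F 0 / (Nat.factorial (i.1 + j.1 + 1) : ℂ))).re
      = ∑ i : Fin n, ∑ j : Fin n, c i * c j *
      ((iteratedDeriv (i.1 + j.1 + 1) F 0).re / (Nat.factorial (i.1 + j.1 + 1) : ℝ)) := by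
    simp only [Complex.re_sum]
    refine Finset.sum_congr rfl fun i _ => Finset.sum_congr rfl fun j _ => ?_
    rw [← Complex.ofReal_mul, Complex.re_ofReal_mul, Complex.div_natCast_re]
  rw [← hlhs, hre]
  exact div_nonneg hlim hpi.le

theorem sol_deriv {θ f : ℝ → ℝ} (hf : IsSolution θ f) (t : ℝ) :
    HasDerivAt f (deriv f t) t ∧ HasDerivAt (deriv f) (-(θ t * f t)) t := by
  have h1 : Differentiable ℝ f := hf.1.differentiable (by simp)
  have h2 : Differentiable ℝ (deriv f) := by
    have := hf.1.differentiable_iteratedDeriv 1 (by exact_mod_cast WithTop.coe_lt_top 1)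
    simpa [iteratedDeriv_one] using this
  refine ⟨(h1 t).hasDerivAt, ?_⟩
  have := (h2 t).hasDerivAt
  rwa [eq_neg_of_add_eq_zero_left (hf.2 t)] at this

theorem wronskian_const {θ f g : ℝ → ℝ} (hf : IsSolution θ f) (hg : IsSolution θ g) (s t : ℝ) :
    f s * deriv g s - deriv f s * g s = f t * deriv g t - deriv f t * g t := by
  have hd : ∀ u, HasDerivAt (fun u => f u * deriv g u - deriv f u * g u) 0 u := by
    intro u
    obtain ⟨a, b⟩ := sol_deriv hf u
    obtain ⟨c, d⟩ := sol_deriv hg u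
    exact ((a.mul d).sub (b.mul c)).congr_deriv (by ring)
  exact is_const_of_deriv_eq_zero (fun u => (hd u).differentiableAt) (fun u => (hd u).deriv) s t

theorem sol_comb {θ f g : ℝ → ℝ} (hf : IsSolution θ f) (hg : IsSolution θ g) (a b : ℝ) :
    IsSolution θ (fun t => a * f t + b * g t) ∧
      ∀ t, deriv (fun t => a * f t + b * g t) t = a * deriv f t + b * deriv g t := by
  have hd : ∀ t, deriv (fun t => a * f t + b * g t) t = a * deriv f t + b * deriv g t := fun t =>
    (((sol_deriv hf t).1.const_mul a).add ((sol_deriv hg t).1.const_mul b)).deriv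
  refine ⟨⟨(contDiff_const.mul hf.1).add (contDiff_const.mul hg.1), fun t => ?_⟩, hd⟩
  rw [show deriv (fun t => a * f t + b * g t) = _ from funext hd]
  rw [(((sol_deriv hf t).2.const_mul a).fun_add ((sol_deriv hg t).2.const_mul b)).deriv]
  ring

theorem exists_fund {θ : ℝ → ℝ} {R : ℝ} (h : HypR θ R) (x : ℝ) :
    ∃ g₁ g₂, IsFundPair θ x g₁ g₂ := by
  obtain ⟨f₁, f₂, H, h1, h2, hW, -⟩ := h
  rw [wronskian_const h1 h2 0 x] at hW
  set W := f₁ x * deriv f₂ x - deriv f₁ x * f₂ x with hWd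
  obtain ⟨p1, p2⟩ := sol_comb h1 h2 (deriv f₂ x / W) (-deriv f₁ x / W)
  obtain ⟨p3, p4⟩ := sol_comb h1 h2 (-f₂ x / W) (f₁ x / W)
  refine ⟨_, _, p1, p3, ?_, ?_, ?_, ?_⟩
  · field_simp; rw [hWd]; ring
  · rw [p2]; field_simp; ring
  · field_simp; ring
  · rw [p4]; field_simp; rw [hWd]; ring

theorem exists_Hx {θ : ℝ → ℝ} {R : ℝ} (hR : 0 < R) (h : HypR θ R) (x : ℝ) (g₁ g₂ : ℝ → ℝ)
    (hg : IsFundPair θ x g₁ g₂) :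
    ∃ Hx : ℂ → ℂ, AnalyticAt ℂ Hx x ∧ DifferentiableOn ℂ Hx {z | 0 < z.im ∧ z.im < R} ∧
      (∀ z : ℂ, 0 < z.im → z.im < R → 0 < (Hx z).im) ∧
      ∀ᶠ t : ℝ in 𝓝 x, Hx t = ((g₂ t / g₁ t : ℝ) : ℂ) := by
  obtain ⟨f₁, f₂, H, h1, h2, hW, hH, hHd, hHp, hHi⟩ := h
  obtain ⟨k1, k2, gx1, gx2, gx3, gx4⟩ := hg
  rw [wronskian_const h1 h2 0 x] at hW hHi
  set W := f₁ x * deriv f₂ x - deriv f₁ x * f₂ x with hWd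
  have e1 : ∀ t, W * g₁ t = deriv f₂ x * f₁ t - deriv f₁ x * f₂ t := by
    intro t
    have w1 := wronskian_const h1 k1 t x
    have w2 := wronskian_const k1 h2 t x
    have w3 := wronskian_const h1 h2 t x
    rw [gx1, gx2] at w1 w2
    rw [← hWd] at w3
    rw [← w3]
    linear_combination f₂ t * w1 + f₁ t * w2
  have e2 : ∀ t, W * g₂ t = f₁ x * f₂ t - f₂ x * f₁ t := by
    intro t
    have w1 := wronskian_const h1 k2 t x
    have w2 := wronskian_const k2 h2 t x
    have w3 := wronskian_const h1 h2 t x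
    rw [gx3, gx4] at w1 w2
    rw [← hWd] at w3
    rw [← w3]
    linear_combination f₂ t * w1 + f₁ t * w2
  set S := {z : ℂ | |z.im| < R ∧ ∀ t : ℝ, f₁ t = 0 → z ≠ (t : ℂ)} with hS
  set N : ℂ → ℂ := fun z => (f₁ x : ℂ) * H z - f₂ x with hN
  set D : ℂ → ℂ := fun z => ((deriv f₂ x : ℝ) : ℂ) - deriv f₁ x * H z with hD
  have hSev : ∀ᶠ z in 𝓝[≠] (x : ℂ), z ∈ S := by
    have q1 : ∀ᶠ z in 𝓝[≠] (x : ℂ), |z.im| < R := by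
      apply nhdsWithin_le_nhds
      have : ContinuousAt (fun z : ℂ => |z.im|) x := by fun_prop
      exact this.eventually_lt continuousAt_const (by simpa using hR)
    have q2 : ∀ᶠ t in 𝓝[≠] x, f₁ t ≠ 0 := by
      by_cases hx : f₁ x = 0
      · have : deriv f₁ x ≠ 0 := by
          intro h0; apply hW; rw [hWd, hx, h0]; ring
        exact (sol_deriv h1 x).1.eventually_ne this
      · exact nhdsWithin_le_nhds ((sol_deriv h1 x).1.continuousAt.eventually_ne hx)
    rw [eventually_nhdsWithin_iff] at q2
    have q3 : ∀ᶠ z in 𝓝 (x : ℂ), z.re ∈ ({x}ᶜ : Set ℝ) → f₁ z.re ≠ 0 :=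
      (Complex.continuous_re.tendsto' (x : ℂ) x (by simp)).eventually q2
    filter_upwards [q1, nhdsWithin_le_nhds q3, self_mem_nhdsWithin] with z z1 z2 z3
    refine ⟨z1, ?_⟩
    rintro t ht rfl
    simp only [Complex.ofReal_re] at z2
    refine z2 ?_ ht
    intro htx
    apply z3
    simp at htx
    simp [htx]
  have hSupper : ∀ z : ℂ, 0 < z.im → z.im < R → z ∈ S := by
    intro z a b
    refine ⟨by rwa [abs_of_pos a], ?_⟩
    rintro t ht rfl
    simp at a
  have hSopen : ∀ z ∈ S, z.im ≠ 0 → S ∈ 𝓝 z := by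
    intro z hz hz0
    have q1 : ∀ᶠ w in 𝓝 z, |w.im| < R := by
      have : ContinuousAt (fun z : ℂ => |z.im|) z := by fun_prop
      exact this.eventually_lt continuousAt_const hz.1
    have q2 : ∀ᶠ w in 𝓝 z, w.im ≠ 0 := Complex.continuous_im.continuousAt.eventually_ne hz0
    filter_upwards [q1, q2] with w w1 w2
    refine ⟨w1, ?_⟩
    rintro t ht rfl
    simp at w2
  have hHat : ∀ᶠ z in 𝓝[≠] (x : ℂ), DifferentiableAt ℂ H z := by
    have := eventually_eventually_nhdsWithin.2 hSev
    filter_upwards [this, self_mem_nhdsWithin] with z hz hzx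
    have : 𝓝[≠] (x:ℂ) ≤ 𝓝[≠] (x:ℂ) := le_rfl
    rw [(isOpen_compl_singleton).nhdsWithin_eq hzx] at hz
    exact hHd.differentiableAt hz
  -- behaviour at x
  have hlim : (∀ᶠ z in 𝓝[≠] (x : ℂ), D z ≠ 0) ∧ Tendsto (fun z => N z / D z) (𝓝[≠] (x : ℂ)) (𝓝 0) := by
    by_cases hx : f₁ x = 0
    · have hd0 : deriv f₁ x ≠ 0 := by
        intro h0; apply hW; rw [hWd, hx, h0]; ring
      have hd0C : ((deriv f₁ x : ℝ) : ℂ) ≠ 0 := by exact_mod_cast hd0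
      have t1 : Tendsto H (𝓝[≠] (x:ℂ)) (Bornology.cobounded ℂ) :=
        tendsto_norm_atTop_iff_cobounded.1 (hHp x hx)
      have t2 : Tendsto (fun z => (H z)⁻¹) (𝓝[≠] (x:ℂ)) (𝓝 0) := tendsto_inv₀_cobounded.comp t1
      have t3 : ∀ᶠ z in 𝓝[≠] (x:ℂ), H z ≠ 0 := by
        filter_upwards [(hHp x hx).eventually_gt_atTop 0] with z hz
        exact norm_pos_iff.1 hz
      have t4 : Tendsto (fun z => ((deriv f₂ x : ℝ) : ℂ) * (H z)⁻¹ - deriv f₁ x) (𝓝[≠] (x:ℂ))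
          (𝓝 (-((deriv f₁ x : ℝ) : ℂ))) := by
        have := (t2.const_mul ((deriv f₂ x : ℝ) : ℂ)).sub_const ((deriv f₁ x : ℝ) : ℂ)
        simpa using this
      have t5 := t4.eventually_ne (neg_ne_zero.2 hd0C)
      have t6 : ∀ z, H z ≠ 0 → D z = (((deriv f₂ x : ℝ) : ℂ) * (H z)⁻¹ - deriv f₁ x) * H z := by
        intro z hz
        simp only [hD]
        field_simp
      constructor
      · filter_upwards [t3, t5] with z a b
        rw [t6 z a]
        exact mul_ne_zero b a
      · have t7 := (t2.const_mul (-(f₂ x : ℂ))).div t4 (neg_ne_zero.2 hd0C)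
        simp only [mul_zero, zero_div] at t7
        refine t7.congr' ?_
        filter_upwards [t3, t5] with z a b
        simp only [Pi.div_apply]
        rw [t6 z a]
        simp only [hN, hx]
        field_simp
        simp [neg_div]
    · have hxS : S ∈ 𝓝 (x:ℂ) := by
        have : (x:ℂ) ∈ S := by
          refine ⟨by simpa using hR, ?_⟩
          intro t ht hh
          have : x = t := by exact_mod_cast hh
          exact hx (this ▸ ht)
        have h3 := eventually_nhdsWithin_iff.1 hSev
        filter_upwards [h3] with z hz
        by_cases hzx : z = x
        · rwa [hzx]
        · exact hz hzx
      have hHc : ContinuousAt H x := (hHd.differentiableAt hxS).continuousAt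
      have hxC : (f₁ x : ℂ) ≠ 0 := by exact_mod_cast hx
      have hDc : ContinuousAt D x := continuousAt_const.sub (continuousAt_const.mul hHc)
      have hNc : ContinuousAt N x := (continuousAt_const.mul hHc).sub continuousAt_const
      have hDx : D x ≠ 0 := by
        have : D x = ((W / f₁ x : ℝ) : ℂ) := by
          simp only [hD, hH x hx, hWd]
          push_cast
          field_simp
        rw [this]
        exact_mod_cast div_ne_zero hW hx
      have hNx : N x = 0 := by
        simp only [hN, hH x hx]
        push_cast
        field_simp
        ring
      refine ⟨nhdsWithin_le_nhds (hDc.eventually_ne hDx), ?_⟩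
      have := (hNc.div hDc hDx).tendsto
      simp only [Pi.div_apply, hNx, zero_div] at this
      exact this.mono_left nhdsWithin_le_nhds
  obtain ⟨hDne, hND⟩ := hlim
  have hHim : ∀ z : ℂ, 0 < z.im → z.im < R → 0 < W * (H z).im := by
    intro z a b
    exact (pos_iff_pos_of_mul_pos (hHi z a b)).2 a
  have hDup : ∀ z : ℂ, 0 < z.im → z.im < R → D z ≠ 0 := by
    intro z a b hDz
    have hp := hHim z a b
    have i1 := congrArg Complex.im hDz
    have i2 := congrArg Complex.re hDz
    simp [hD] at i1 i2
    rcases i1 with i1 | i1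
    · rw [i1] at i2
      simp at i2
      apply hW; rw [hWd, i1, i2]; ring
    · rw [i1] at hp; simp at hp
  have hupper : ∀ z : ℂ, 0 < z.im → z ≠ x := by
    rintro z hz rfl
    simp at hz
  refine ⟨Function.update (fun z => N z / D z) (x : ℂ) 0, ?_, ?_, ?_, ?_⟩
  · apply Complex.analyticAt_of_differentiable_on_punctured_nhds_of_continuousAt
    · filter_upwards [hHat, hDne, self_mem_nhdsWithin] with z z1 z2 z3
      have hd : DifferentiableAt ℂ (fun z => N z / D z) z :=
        DifferentiableAt.fun_div ((z1.const_mul _).sub_const _) ((z1.const_mul _).const_sub _) z2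
      refine hd.congr_of_eventuallyEq ?_
      filter_upwards [isOpen_compl_singleton.mem_nhds z3] with w hw
      rw [Function.update_of_ne hw]
    · rw [continuousAt_update_same]
      exact hND
  · intro z hz
    have hd0 := hHd.differentiableAt (hSopen z (hSupper z hz.1 hz.2) hz.1.ne')
    have hd : DifferentiableAt ℂ (fun z => N z / D z) z :=
      DifferentiableAt.fun_div ((hd0.const_mul _).sub_const _) ((hd0.const_mul _).const_sub _)
        (hDup z hz.1 hz.2)
    refine (hd.congr_of_eventuallyEq ?_).differentiableWithinAt
    filter_upwards [isOpen_compl_singleton.mem_nhds (hupper z hz.1)] with w hw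
    rw [Function.update_of_ne hw]
  · intro z a b
    rw [Function.update_of_ne (hupper z a)]
    have hDz := hDup z a b
    have : (N z / D z).im = W * (H z).im / Complex.normSq (D z) := by
      rw [Complex.div_im]
      simp only [hN, hD, hWd]
      simp
      ring
    rw [this]
    exact div_pos (hHim z a b) (Complex.normSq_pos.2 hDz)
  · have q2 : ∀ᶠ t : ℝ in 𝓝[≠] x, ((t : ℂ)) ∈ S := by
      rw [eventually_nhdsWithin_iff] at hSev ⊢
      filter_upwards [Complex.continuous_ofReal.continuousAt.eventually hSev] with t ht htx
      exact ht (by simpa using htx)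
    rw [eventually_nhdsWithin_iff] at q2
    filter_upwards [q2] with t ht
    by_cases htx : t = x
    · rw [htx, gx3]; simp
    · have hf : f₁ t ≠ 0 := fun h0 => (ht htx).2 t h0 rfl
      rw [Function.update_of_ne (by exact_mod_cast htx)]
      simp only [hN, hD, hH t hf]
      rw [← mul_div_mul_left (g₂ t) (g₁ t) hW, e1, e2,
        ← mul_div_mul_right (f₁ x * f₂ t - f₂ x * f₁ t) _ (inv_ne_zero hf)]
      have u1 : (f₁ x * f₂ t - f₂ x * f₁ t) * (f₁ t)⁻¹ = f₁ x * (f₂ t / f₁ t) - f₂ x := by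
        field_simp
      have u2 : (deriv f₂ x * f₁ t - deriv f₁ x * f₂ t) * (f₁ t)⁻¹
          = deriv f₂ x - deriv f₁ x * (f₂ t / f₁ t) := by
        field_simp
      rw [u1, u2]
      push_cast
      rfl

theorem theta_analytic {θ : ℝ → ℝ} {R : ℝ} (hR : 0 < R) (h : HypR θ R) (x : ℝ) :
    AnalyticAt ℝ θ x := by
  obtain ⟨g₁, g₂, hg⟩ := exists_fund h x
  obtain ⟨Hx, hA, -, -, hev⟩ := exists_Hx hR h x g₁ g₂ hg
  obtain ⟨k1, k2, gx1, gx2, gx3, gx4⟩ := hg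
  have hk : AnalyticAt ℝ (fun t => g₂ t / g₁ t) x := by
    refine hA.re_ofReal.congr ?_
    filter_upwards [hev] with t ht
    rw [ht, Complex.ofReal_re]
  have hpos : ∀ᶠ t in 𝓝 x, 0 < g₁ t :=
    continuousAt_const.eventually_lt (sol_deriv k1 x).1.continuousAt (by rw [gx1]; norm_num)
  have hkd : ∀ᶠ t in 𝓝 x, deriv (fun t => g₂ t / g₁ t) t = (g₁ t ^ 2)⁻¹ := by
    filter_upwards [hpos] with t ht
    rw [((sol_deriv k2 t).1.fun_div (sol_deriv k1 t).1 ht.ne').deriv]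
    have w := wronskian_const k1 k2 t x
    rw [gx1, gx2, gx3, gx4] at w
    rw [div_eq_mul_inv]
    have : deriv g₂ t * g₁ t - g₂ t * deriv g₁ t = 1 := by linear_combination w
    rw [this, one_mul]
  have hkpos : 0 < deriv (fun t => g₂ t / g₁ t) x := by
    rw [hkd.self_of_nhds, gx1]; norm_num
  have hg1 : AnalyticAt ℝ g₁ x := by
    have h2 : AnalyticAt ℝ (fun t => Real.exp (-(1/2) * Real.log (deriv (fun t => g₂ t / g₁ t) t))) x :=
      (analyticAt_const.mul (hk.deriv.log hkpos)).rexp'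
    refine h2.congr ?_
    filter_upwards [hkd, hpos] with t a b
    rw [a, Real.log_inv, Real.log_pow]
    rw [show -(1/2) * -(((2:ℕ):ℝ) * Real.log (g₁ t)) = Real.log (g₁ t) by push_cast; ring,
      Real.exp_log b]
  have h3 : AnalyticAt ℝ (fun t => -(deriv (deriv g₁) t) / g₁ t) x :=
    (hg1.deriv.deriv.neg).div hg1 (by rw [gx1]; norm_num)
  refine h3.congr ?_
  filter_upwards [hpos] with t ht
  have := k1.2 t
  field_simp
  linarith

theorem det_part {θ : ℝ → ℝ} {R : ℝ} (hR : 0 < R) (h : HypR θ R) (x : ℝ) (f₁ f₂ : ℝ → ℝ)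
    (hg : IsFundPair θ x f₁ f₂) (n : ℕ) : 0 ≤ DetR R x f₁ f₂ n := by
  obtain ⟨Hx, hA, hd, hi, hev⟩ := exists_Hx hR h x f₁ f₂ hg
  have hpi := Real.pi_pos
  set a : ℝ := Real.pi / R with ha
  have ha0 : 0 < a := by positivity
  set G : ℂ → ℂ := fun z => (x : ℂ) + ((-(R / Real.pi) : ℝ) : ℂ) * Complex.log (1 - (a : ℂ) * z) with hG
  set F : ℂ → ℂ := fun z => Hx (G z) with hF
  have hGr : ∀ᶠ t : ℝ in 𝓝 0, G t = ((x + gR R t : ℝ) : ℂ) := by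
    have : ∀ᶠ t : ℝ in 𝓝 0, 0 < 1 - a * t := by
      have : ContinuousAt (fun t : ℝ => 1 - a * t) 0 := by fun_prop
      exact continuousAt_const.eventually_lt this (by simp)
    filter_upwards [this] with t ht
    simp only [hG, gR, ← ha]
    push_cast [Complex.ofReal_log ht.le]
    rfl
  have hG0 : G 0 = x := by simp [hG]
  have hGA : AnalyticAt ℂ G 0 := by
    refine analyticAt_const.add (analyticAt_const.mul ?_)
    refine AnalyticAt.clog (analyticAt_const.sub (analyticAt_const.mul analyticAt_id)) ?_
    simp
  have hF0 : AnalyticAt ℂ F 0 := by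
    refine AnalyticAt.fun_comp ?_ hGA
    rwa [hG0]
  have hgc : Tendsto (fun t => x + gR R t) (𝓝 0) (𝓝 x) := by
    have : ContinuousAt (fun t => x + gR R t) 0 := by
      unfold gR
      refine continuousAt_const.add (continuousAt_const.mul (ContinuousAt.log ?_ ?_))
      · fun_prop
      · simp
    have h0 : x + gR R 0 = x := by simp [gR]
    simpa [ContinuousAt, h0] using this
  have hFr : ∀ᶠ t : ℝ in 𝓝 0, F t = ((f₂ (x + gR R t) / f₁ (x + gR R t) : ℝ) : ℂ) := by
    filter_upwards [hGr, hgc.eventually hev] with t t1 t2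
    simp only [hF]
    rw [t1, t2]
  have hGim : ∀ z : ℂ, 0 < z.im → 0 < (G z).im ∧ (G z).im < R ∧ (1 - (a : ℂ) * z) ∈ Complex.slitPlane := by
    intro z hz
    have him : (1 - (a : ℂ) * z).im < 0 := by
      simp; positivity
    have h1 : (G z).im = (R / Real.pi) * (-(1 - (a : ℂ) * z).arg) := by
      simp only [hG]
      rw [Complex.add_im, Complex.ofReal_im, Complex.im_ofReal_mul, Complex.log_im]
      ring
    have h2 := Complex.arg_neg_iff.2 him
    have h3 := Complex.neg_pi_lt_arg (1 - (a : ℂ) * z)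
    refine ⟨?_, ?_, Or.inr him.ne⟩
    · rw [h1]; exact mul_pos (by positivity) (by linarith)
    · rw [h1]
      calc R / Real.pi * (-(1 - (a : ℂ) * z).arg) < R / Real.pi * Real.pi := by
            apply mul_lt_mul_of_pos_left _ (by positivity); linarith
        _ = R := by field_simp
  have hopen : IsOpen {z : ℂ | 0 < z.im ∧ z.im < R} :=
    (isOpen_lt continuous_const Complex.continuous_im).inter
      (isOpen_lt Complex.continuous_im continuous_const)
  have hFd : DifferentiableOn ℂ F {z | 0 < z.im} := by
    intro z hz
    obtain ⟨p1, p2, p3⟩ := hGim z hz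
    have d1 : DifferentiableAt ℂ Hx (G z) := hd.differentiableAt (hopen.mem_nhds ⟨p1, p2⟩)
    have d2 : DifferentiableAt ℂ G z := by
      refine DifferentiableAt.const_add _ (DifferentiableAt.const_mul ?_ _)
      refine DifferentiableAt.clog ?_ p3
      fun_prop
    exact (d1.comp z d2).differentiableWithinAt
  have hFi : ∀ z : ℂ, 0 < z.im → 0 ≤ (F z).im := by
    intro z hz
    obtain ⟨p1, p2, p3⟩ := hGim z hz
    exact (hi _ p1 p2).le
  have hreal : ∀ᶠ t : ℝ in 𝓝 0, (F t).im = 0 := by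
    filter_upwards [hFr] with t ht
    rw [ht, Complex.ofReal_im]
  have hS : ∀ m, SchR R x f₁ f₂ m = (iteratedDeriv m F 0).re := by
    intro m
    have := (iter_transfer F (fun t => f₂ (x + gR R t) / f₁ (x + gR R t)) 0 (by simpa using hF0)
      hFr m).self_of_nhds
    rw [Complex.ofReal_zero] at this
    rw [this, Complex.ofReal_re]
    rfl
  unfold DetR
  apply Matrix.PosSemidef.det_nonneg
  apply Matrix.PosSemidef.of_dotProduct_mulVec_nonneg
  · ext i j
    simp only [Matrix.conjTranspose_apply, Matrix.of_apply, star_trivial]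
    rw [add_comm j.1 i.1]
  · intro c
    have := pick_hankel F hF0 hFd hFi hreal n c
    convert this using 1
    · rfl
    simp only [dotProduct, Matrix.mulVec, Matrix.of_apply, hS, Finset.mul_sum]
    refine Finset.sum_congr rfl fun i _ => ?_
    refine Finset.sum_congr rfl fun j _ => ?_
    simp only [Pi.star_apply, star_trivial]
    ring

/-- If θ is smooth, `0 < R`, and Hypothesis (H_R) holds, then θ is real
analytic on ℝ and `𝒟_n^{θ,g_R}(x) ≥ 0` for every `n ≥ 1` and every `x`. -/
theorem stmt0 (θ : ℝ → ℝ) (hθ : ContDiff ℝ (⊤ : ℕ∞) θ) (R : ℝ) (hR : 0 < R)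
    (hHyp : HypR θ R) :
    (∀ x : ℝ, AnalyticAt ℝ θ x) ∧
    (∀ (x : ℝ) (f₁ f₂ : ℝ → ℝ), IsFundPair θ x f₁ f₂ →
      ∀ n : ℕ, 1 ≤ n → 0 ≤ DetR R x f₁ f₂ n) :=
  ⟨fun x => theta_analytic hR hHyp x,
    fun x f₁ f₂ hg n _ => det_part hR hHyp x f₁ f₂ hg n⟩

end
end

section
/- Let θ : ℝ → ℝ be smooth, let R ∈ (0,∞), assume Hypothesis (H_R) holds, and assume K := sup_{t ∈ ℝ} θ(t) satisfies 0 < K < ∞. Set c := π/(R·(1 − e^{−π²/(2R√K)})). Then for every x ∈ ℝ there exists a nonnegative Borel measure μ_x on ℝ with support contained in [−c, c] such that for every integer n ≥ 1, 𝒮_n^{θ,g_R}(x) = n! · ∫ t^{n−1} dμ_x(t). -/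
noncomputable section

open MeasureTheory Filter

section PoissonPart

open Complex


lemma inv_aux {a b w D : ℂ} (ha : a ≠ 0) (_hb : b ≠ 0) (hw : w ≠ 0) (hD : D ≠ 0)
    (h : a * b = w * D) : a⁻¹ = b * w⁻¹ * D⁻¹ := by
  field_simp
  linear_combination -h

lemma poisson_aux (φ : ℂ → ℂ) (hφ : DiffContOnCl ℂ φ (Metric.ball 0 1)) (h0 : φ 0 = 0)
    (z : ℝ) (hz : |z| < 1) :
    ∫ θ in (0:ℝ)..2 * Real.pi, (φ (circleMap 0 1 θ)).im *
      (z * Real.sin θ / (1 - 2 * z * Real.cos θ + z ^ 2)) = Real.pi * (φ z).re := by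
  have hden : ∀ w ∈ closure (Metric.ball (0:ℂ) 1), 1 - (z:ℂ) * w ≠ 0 := by
    intro w hw h
    rw [closure_ball _ one_ne_zero, mem_closedBall_zero_iff] at hw
    have h1 : (z:ℂ) * w = 1 := by linear_combination -h
    have h2 : |z| * ‖w‖ = 1 := by
      have := congrArg norm h1; simpa using this
    nlinarith [norm_nonneg w, abs_nonneg z]
  have hg : DiffContOnCl ℂ (fun w => (1 - (z:ℂ) * w)⁻¹ * φ w) (Metric.ball 0 1) := by
    have : DiffContOnCl ℂ (fun w => (1 - (z:ℂ) * w)⁻¹) (Metric.ball 0 1) :=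
      DiffContOnCl.inv (Differentiable.diffContOnCl (by fun_prop)) hden
    exact this.smul hφ
  have e1 := hg.circleIntegral_sub_inv_smul (w := 0) (by simp)
  have e2 := hφ.circleIntegral_sub_inv_smul (w := (z:ℂ)) (by simpa using hz)
  have hmem : ∀ θ : ℝ, circleMap 0 1 θ ∈ closure (Metric.ball (0:ℂ) 1) := fun θ => by
    rw [closure_ball _ one_ne_zero]; exact circleMap_mem_closedBall _ zero_le_one _
  have hcφ : Continuous fun θ : ℝ => φ (circleMap 0 1 θ) :=
    hφ.continuousOn.comp_continuous (continuous_circleMap 0 1) hmem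
  have hne : ∀ θ : ℝ, circleMap 0 1 θ ≠ 0 := fun θ => circleMap_ne_center one_ne_zero
  have hd2 : ∀ θ : ℝ, circleMap 0 1 θ - z ≠ 0 := fun θ h => by
    have : circleMap 0 1 θ = z := by linear_combination h
    have := congrArg norm this
    simp at this
    linarith
  simp only [circleIntegral, deriv_circleMap, smul_eq_mul, sub_zero] at e1 e2
  have i1 : Continuous fun θ : ℝ => circleMap 0 1 θ * I * ((circleMap 0 1 θ)⁻¹ * ((1 - (z:ℂ) * circleMap 0 1 θ)⁻¹ * φ (circleMap 0 1 θ))) := by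
    have := continuous_circleMap 0 1
    refine Continuous.mul (by fun_prop) (Continuous.mul (this.inv₀ hne) (Continuous.mul ?_ hcφ))
    exact Continuous.inv₀ (by fun_prop) (fun θ => hden _ (hmem θ))
  have i2 : Continuous fun θ : ℝ => circleMap 0 1 θ * I * ((circleMap 0 1 θ - z)⁻¹ * φ (circleMap 0 1 θ)) := by
    have := continuous_circleMap 0 1
    refine Continuous.mul (by fun_prop) (Continuous.mul ?_ hcφ)
    exact Continuous.inv₀ (by fun_prop) hd2
  have e3 := congrArg₂ (· - ·) e1 e2
  rw [← intervalIntegral.integral_sub (i1.intervalIntegrable _ _) (i2.intervalIntegrable _ _)] at e3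
  have key : ∀ θ : ℝ, circleMap 0 1 θ * I * ((circleMap 0 1 θ)⁻¹ * ((1 - (z:ℂ) * circleMap 0 1 θ)⁻¹ * φ (circleMap 0 1 θ))) - circleMap 0 1 θ * I * ((circleMap 0 1 θ - z)⁻¹ * φ (circleMap 0 1 θ)) = -2 * (φ (circleMap 0 1 θ) * ((z * Real.sin θ / (1 - 2 * z * Real.cos θ + z ^ 2) : ℝ) : ℂ)) := by
    intro θ
    have hw : circleMap 0 1 θ = Real.cos θ + Real.sin θ * I := by
      simp [circleMap, Complex.exp_mul_I]
    have hcs : (Real.cos θ : ℂ) ^ 2 + (Real.sin θ : ℂ) ^ 2 = 1 := by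
      exact_mod_cast Real.cos_sq_add_sin_sq θ
    have h1 := hden _ (hmem θ)
    have h2 := hd2 θ
    have h3 := hne θ
    have hI : I ^ 2 = -1 := I_sq
    have h4 : (1 - (z:ℂ) * circleMap 0 1 θ) * (circleMap 0 1 θ - z) = circleMap 0 1 θ * (1 - 2 * z * Real.cos θ + z ^ 2) := by
      rw [hw]
      linear_combination (-(z:ℂ) * Real.sin θ ^ 2) * hI + (z:ℂ) * hcs
    have h5 : (1 - 2 * z * Real.cos θ + z ^ 2 : ℂ) ≠ 0 := by
      intro h; rw [h, mul_zero] at h4; exact mul_ne_zero h1 h2 h4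
    push_cast
    push_cast at h4 h5 hw hcs
    rw [show ∀ a : ℂ, circleMap 0 1 θ * I * ((circleMap 0 1 θ)⁻¹ * a) = I * a by intro a; field_simp]
    rw [inv_aux h1 h2 h3 h5 h4, inv_aux h2 h1 h3 h5 (by rw [← h4]; ring)]
    have hwi : (circleMap 0 1 θ)⁻¹ = Complex.cos θ - Complex.sin θ * I := by
      rw [inv_eq_iff_eq_inv, eq_comm, inv_eq_of_mul_eq_one_left]
      rw [hw]
      linear_combination (-Complex.sin θ ^ 2) * hI + hcs
    rw [show circleMap 0 1 θ * I * ((1 - (z:ℂ) * circleMap 0 1 θ) * (circleMap 0 1 θ)⁻¹ * (1 - 2 * z * Complex.cos θ + z ^ 2)⁻¹ * φ (circleMap 0 1 θ)) = I * (1 - (z:ℂ) * circleMap 0 1 θ) * (1 - 2 * z * Complex.cos θ + z ^ 2)⁻¹ * φ (circleMap 0 1 θ) by field_simp]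
    rw [hwi]
    generalize φ (circleMap 0 1 θ) = P
    rw [hw, div_eq_mul_inv]
    generalize (1 - 2 * (z:ℂ) * Complex.cos θ + z ^ 2)⁻¹ = D
    linear_combination (I * D * P) * hcs + (2 * z * Complex.sin θ * D * P - Complex.sin θ ^ 2 * I * D * P) * hI
  simp only [key] at e3
  rw [intervalIntegral.integral_const_mul] at e3
  have e4 : ∫ θ in (0:ℝ)..2 * Real.pi, φ (circleMap 0 1 θ) * ((z * Real.sin θ / (1 - 2 * z * Real.cos θ + z ^ 2) : ℝ) : ℂ) = Real.pi * I * φ z := by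
    rw [h0] at e3
    linear_combination (-1/2) * e3
  have hc4 : Continuous fun θ : ℝ => φ (circleMap 0 1 θ) * ((z * Real.sin θ / (1 - 2 * z * Real.cos θ + z ^ 2) : ℝ) : ℂ) := by
    have := (i1.sub i2).const_smul (-1/2 : ℂ)
    refine this.congr fun θ => ?_
    simp only [key, Pi.smul_apply, Pi.sub_apply, smul_eq_mul]; ring
  have e5 := congrArg Complex.im e4
  have e6 := Complex.imCLM.intervalIntegral_comp_comm (hc4.intervalIntegrable (μ := volume) 0 (2 * Real.pi))
  simp only [Complex.imCLM_apply] at e6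
  rw [← e6] at e5
  simpa [-Complex.ofReal_div, -Complex.ofReal_mul, Complex.im_mul_ofReal] using e5

lemma herglotz_aux (f : ℂ → ℂ) (hf : DifferentiableOn ℂ f (Metric.ball 0 1)) (h0 : f 0 = 0)
    (hpos : ∀ z ∈ Metric.ball (0:ℂ) 1, 0 ≤ (f z).im * z.im) :
    ∃ μ : Measure ℝ, IsFiniteMeasure μ ∧ ∀ z : ℝ, |z| < 1 →
      (f z).re = ∫ θ, z / (1 - 2 * z * Real.cos θ + z ^ 2) ∂μ := by
  -- radii
  set r : ℕ → ℝ := fun n => 1 - 1 / ((n:ℝ) + 1) with hr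
  have hr0 : ∀ n, 0 ≤ r n := fun n => by
    simp only [hr, sub_nonneg]; rw [div_le_one (by positivity)]; linarith [Nat.cast_nonneg (α := ℝ) n]
  have hr1 : ∀ n, r n < 1 := fun n => by
    have : 0 < 1 / ((n:ℝ) + 1) := by positivity
    simp only [hr]; linarith
  have hrlim : Tendsto r atTop (nhds 1) := by
    have := tendsto_one_div_add_atTop_nhds_zero_nat (𝕜 := ℝ)
    simpa [hr] using this.const_sub 1
  have hden : ∀ z : ℝ, |z| < 1 → ∀ θ : ℝ, (1 - |z|) ^ 2 ≤ 1 - 2 * z * Real.cos θ + z ^ 2 := by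
    intro z hz θ
    have h1 : z * Real.cos θ ≤ |z| := by
      calc z * Real.cos θ ≤ |z * Real.cos θ| := le_abs_self _
        _ = |z| * |Real.cos θ| := abs_mul _ _
        _ ≤ |z| * 1 := by gcongr; exact Real.abs_cos_le_one θ
        _ = |z| := mul_one _
    nlinarith [sq_abs z]
  have hdpos : ∀ z : ℝ, |z| < 1 → ∀ θ : ℝ, 0 < 1 - 2 * z * Real.cos θ + z ^ 2 := by
    intro z hz θ
    have : 0 < (1 - |z|) ^ 2 := by have : 0 < 1 - |z| := by linarith
                                   positivity
    linarith [hden z hz θ]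
  have hmap : ∀ n, ∀ w ∈ Metric.closedBall (0:ℂ) 1, (r n : ℂ) * w ∈ Metric.ball (0:ℂ) 1 := by
    intro n w hw
    simp only [mem_closedBall_zero_iff, mem_ball_zero_iff] at *
    rw [norm_mul, Complex.norm_real, Real.norm_eq_abs, abs_of_nonneg (hr0 n)]
    nlinarith [hr0 n, hr1 n]
  have hdc : ∀ n, DiffContOnCl ℂ (fun w => f (r n * w)) (Metric.ball 0 1) := by
    intro n
    apply DifferentiableOn.diffContOnCl
    rw [closure_ball _ one_ne_zero]
    exact hf.comp (by fun_prop) (hmap n)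
  -- densities
  set d : ℕ → ℝ → ℝ := fun n θ => Real.pi⁻¹ * ((f (r n * circleMap 0 1 θ)).im * Real.sin θ) with hd
  have hdc' : ∀ n, Continuous (d n) := by
    intro n
    have : Continuous fun θ : ℝ => f (r n * circleMap 0 1 θ) :=
      (hf.continuousOn).comp_continuous (by have := continuous_circleMap 0 1; fun_prop)
        (fun θ => hmap n _ (circleMap_mem_closedBall _ zero_le_one _))
    simp only [hd]
    have h2 := Complex.continuous_im.comp this
    exact continuous_const.mul (h2.mul Real.continuous_sin)
  have hcim : ∀ θ : ℝ, (circleMap 0 1 θ).im = Real.sin θ := by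
    intro θ; simp [circleMap, Complex.exp_ofReal_mul_I_im]
  have hdn : ∀ n θ, 0 ≤ d n θ := by
    intro n θ
    simp only [hd]
    have h1 := hpos _ (hmap n _ (circleMap_mem_closedBall (0:ℂ) zero_le_one θ))
    rw [Complex.im_ofReal_mul, hcim] at h1
    have hpi : 0 < Real.pi⁻¹ := by positivity
    apply mul_nonneg hpi.le
    rcases eq_or_lt_of_le (hr0 n) with h | h
    · rw [← h]; simp [h0]
    · have : 0 ≤ r n * ((f (r n * circleMap 0 1 θ)).im * Real.sin θ) := by
        linarith
      exact nonneg_of_mul_nonneg_right this h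
  have hP : ∀ n, ∀ z : ℝ, |z| < 1 → ∫ θ in (0:ℝ)..2 * Real.pi, d n θ * (z / (1 - 2 * z * Real.cos θ + z ^ 2))
      = (f (r n * z)).re := by
    intro n z hz
    have := poisson_aux _ (hdc n) (by simp [h0]) z hz
    rw [← mul_right_inj' Real.pi_ne_zero, ← this, ← intervalIntegral.integral_const_mul]
    congr 1
    ext θ
    simp only [hd]
    have := Real.pi_ne_zero
    field_simp
  have hpi : (0:ℝ) ≤ 2 * Real.pi := by positivity
  -- measures
  set m : ℕ → Measure ℝ := fun n =>
    (volume.restrict (Set.Ioc 0 (2 * Real.pi))).withDensity fun θ => ((d n θ).toNNReal : ENNReal) with hm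
  have hmeas : ∀ n, Measurable fun θ => (d n θ).toNNReal := fun n =>
    (hdc' n).measurable.real_toNNReal
  have hmint : ∀ n (g : ℝ → ℝ), ∫ θ, g θ ∂(m n) = ∫ θ in (0:ℝ)..2 * Real.pi, d n θ * g θ := by
    intro n g
    rw [intervalIntegral.integral_of_le hpi]
    simp only [hm]
    rw [integral_withDensity_eq_integral_smul (hmeas n)]
    congr 1
    ext θ
    rw [NNReal.smul_def, Real.coe_toNNReal _ (hdn n θ), smul_eq_mul]
  have hint : ∀ n, IntegrableOn (d n) (Set.Ioc 0 (2 * Real.pi)) := fun n =>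
    ((hdc' n).intervalIntegrable 0 (2 * Real.pi)).1
  have hfin : ∀ n, IsFiniteMeasure (m n) := by
    intro n
    simp only [hm]
    exact isFiniteMeasure_withDensity_ofReal (hint n).2
  -- mass bound
  obtain ⟨C, hC⟩ : ∃ C : ℝ, ∀ n, (f (r n * (1/2 : ℝ))).re ≤ C := by
    have hcomp : IsCompact (Metric.closedBall (0:ℂ) (1/2)) := isCompact_closedBall _ _
    have hcont : ContinuousOn (fun z => (f z).re) (Metric.closedBall (0:ℂ) (1/2)) :=
      Complex.continuous_re.comp_continuousOn (hf.continuousOn.mono (Metric.closedBall_subset_ball (by norm_num)))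
    obtain ⟨C, hC⟩ := hcomp.bddAbove_image hcont
    refine ⟨C, fun n => hC ⟨_, ?_, rfl⟩⟩
    rw [mem_closedBall_zero_iff, ← Complex.ofReal_mul, Complex.norm_real, Real.norm_eq_abs, abs_of_nonneg (by have := hr0 n; positivity)]
    linarith [hr1 n]
  have hmass : ∀ n, (m n).real Set.univ ≤ 9 / 2 * C := by
    intro n
    have h1 := hmint n (fun _ => 1)
    have h2 := hP n (1/2) (by rw [abs_of_pos] <;> norm_num)
    rw [integral_const, smul_eq_mul, mul_one] at h1
    rw [h1]
    have h3 : ∫ θ in (0:ℝ)..2 * Real.pi, d n θ * 1 ≤ ∫ θ in (0:ℝ)..2 * Real.pi, 9 / 2 * (d n θ * ((1/2) / (1 - 2 * (1/2) * Real.cos θ + (1/2) ^ 2))) := by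
      have hd0 : ∀ θ : ℝ, 1 - 2 * (1/2) * Real.cos θ + (1/2) ^ 2 ≠ 0 := fun θ => (hdpos (1/2) (by rw [abs_of_pos] <;> norm_num) θ).ne'
      have hdc'' := hdc' n
      apply intervalIntegral.integral_mono_on hpi
      · exact Continuous.intervalIntegrable (by fun_prop) _ _
      · exact Continuous.intervalIntegrable (by fun_prop (disch := assumption)) _ _
      · intro θ _
        have h4 : 2 / 9 ≤ (1/2) / (1 - 2 * (1/2) * Real.cos θ + (1/2) ^ 2) := by
          rw [div_le_div_iff₀ (by norm_num) (hdpos (1/2) (by rw [abs_of_pos] <;> norm_num) θ)]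
          nlinarith [Real.neg_one_le_cos θ]
        nlinarith [hdn n θ]
    rw [intervalIntegral.integral_const_mul, h2] at h3
    linarith [hC n]
  let M : ℕ → FiniteMeasure ℝ := fun n => ⟨m n, hfin n⟩
  have hcpt := isCompact_setOfPred_finiteMeasure_le_of_isCompact (E := ℝ) (9 / 2 * C).toNNReal
    (isCompact_Icc (a := (0:ℝ)) (b := 2 * Real.pi))
  have hMmem : ∀ n, M n ∈ {μ : FiniteMeasure ℝ | μ.mass ≤ (9 / 2 * C).toNNReal ∧ μ (Set.Icc 0 (2 * Real.pi))ᶜ = 0} := by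
    intro n
    constructor
    · rw [← NNReal.coe_le_coe]
      exact (hmass n).trans (Real.le_coe_toNNReal _)
    · have : m n (Set.Icc 0 (2 * Real.pi))ᶜ = 0 := by
        simp only [hm]
        apply withDensity_absolutelyContinuous
        rw [Measure.restrict_apply (measurableSet_Icc.compl)]
        convert measure_empty (μ := volume)
        ext y
        simp only [Set.mem_inter_iff, Set.mem_compl_iff, Set.mem_Icc, Set.mem_Ioc, Set.mem_empty_iff_false, iff_false]
        rintro ⟨h1, h2, h3⟩
        exact h1 ⟨h2.le, h3⟩
      exact (FiniteMeasure.null_iff_toMeasure_null (M n) _).2 this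
  let U : Ultrafilter ℕ := hyperfilter ℕ
  obtain ⟨μ, -, hμ⟩ := hcpt.ultrafilter_le_nhds' (U.map M) (by
    rw [Ultrafilter.mem_map]; exact Filter.univ_mem' hMmem)
  have hUtop : (U : Filter ℕ) ≤ atTop := Nat.hyperfilter_le_atTop
  have hT : Tendsto M U (nhds μ) := hμ
  rw [FiniteMeasure.tendsto_iff_forall_integral_tendsto] at hT
  refine ⟨μ, inferInstance, fun z hz => ?_⟩
  have hcz : Continuous fun θ : ℝ => z / (1 - 2 * z * Real.cos θ + z ^ 2) := by
    have : ∀ θ : ℝ, 1 - 2 * z * Real.cos θ + z ^ 2 ≠ 0 := fun θ => (hdpos z hz θ).ne'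
    fun_prop (disch := assumption)
  let k : BoundedContinuousFunction ℝ ℝ := BoundedContinuousFunction.ofNormedAddCommGroup _ hcz
    (|z| / (1 - |z|) ^ 2) (by
      intro θ
      rw [norm_div, Real.norm_eq_abs, Real.norm_eq_abs, abs_of_pos (hdpos z hz θ)]
      have : 0 < 1 - |z| := by linarith
      gcongr
      exact hden z hz θ)
  have h1 := hT k
  have h2 : ∀ n, ∫ x, k x ∂(M n : Measure ℝ) = (f (r n * z)).re := by
    intro n
    rw [← hP n z hz, ← hmint n]
    rfl
  simp only [h2] at h1
  have h3 : Tendsto (fun n => (f (r n * z)).re) U (nhds (f z).re) := by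
    have hzb : (z:ℂ) ∈ Metric.ball (0:ℂ) 1 := by simpa using hz
    have hfc : ContinuousAt f z := (hf.continuousOn).continuousAt (Metric.isOpen_ball.mem_nhds hzb)
    have h4 : Tendsto (fun n => (r n : ℂ) * z) U (nhds z) := by
      have : Tendsto (fun n => (r n : ℂ) * z) atTop (nhds ((1:ℝ) * z)) :=
        ((Complex.continuous_ofReal.tendsto _).comp hrlim).mul_const _
      simp only [Complex.ofReal_one, one_mul] at this
      exact this.mono_left hUtop
    exact (Complex.continuous_re.tendsto _).comp (hfc.tendsto.comp h4)
  exact tendsto_nhds_unique h3 h1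

end PoissonPart

lemma wronsk_const {θ u v : ℝ → ℝ} (hu : IsSolution θ u) (hv : IsSolution θ v) (s t : ℝ) :
    u s * deriv v s - deriv u s * v s = u t * deriv v t - deriv u t * v t := by
  obtain ⟨cu, eu⟩ := hu
  obtain ⟨cv, ev⟩ := hv
  have du : Differentiable ℝ u := cu.differentiable (by simp)
  have dv : Differentiable ℝ v := cv.differentiable (by simp)
  have du' : Differentiable ℝ (deriv u) := (contDiff_infty_iff_deriv.1 cu).2.differentiable (by simp)
  have dv' : Differentiable ℝ (deriv v) := (contDiff_infty_iff_deriv.1 cv).2.differentiable (by simp)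
  have hd : ∀ y, HasDerivAt (fun y => u y * deriv v y - deriv u y * v y) 0 y := by
    intro y
    have := ((du y).hasDerivAt.mul (dv' y).hasDerivAt).sub ((du' y).hasDerivAt.mul (dv y).hasDerivAt)
    refine this.congr_deriv ?_
    linear_combination u y * ev y - v y * eu y
  exact is_const_of_deriv_eq_zero (fun y => (hd y).differentiableAt) (fun y => (hd y).deriv) s t

lemma sturm_right {θ u : ℝ → ℝ} {K x : ℝ} (hK : 0 < K) (hθ : ∀ t, θ t ≤ K)
    (hu : IsSolution θ u) (h1 : u x = 1) (h2 : deriv u x = 0) (t : ℝ) (hxt : x ≤ t)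
    (ht : t < x + Real.pi / (2 * Real.sqrt K)) : u t ≠ 0 := by
  intro hut
  obtain ⟨cu, eu⟩ := hu
  have du : Differentiable ℝ u := cu.differentiable (by simp)
  have du' : Differentiable ℝ (deriv u) := (contDiff_infty_iff_deriv.1 cu).2.differentiable (by simp)
  -- least zero
  have hcomp : IsCompact (Set.Icc x t ∩ u ⁻¹' {0}) :=
    isCompact_Icc.inter_right (isClosed_singleton.preimage du.continuous)
  obtain ⟨s, ⟨⟨hxs, hst⟩, hus⟩, hmin⟩ := hcomp.exists_isLeast ⟨t, ⟨hxt, le_rfl⟩, hut⟩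
  have hus : u s = 0 := hus
  have hpos : ∀ y ∈ Set.Icc x s, 0 ≤ u y := by
    intro y hy
    by_contra hneg
    push Not at hneg
    have : (0:ℝ) ∈ Set.Icc (u y) (u x) := ⟨hneg.le, by rw [h1]; norm_num⟩
    obtain ⟨z, hz, hz0⟩ := intermediate_value_Icc' hy.1 du.continuous.continuousOn this
    have h3 : s ≤ z := hmin ⟨⟨hz.1, hz.2.trans (hy.2.trans hst)⟩, hz0⟩
    have : y = s := le_antisymm hy.2 (h3.trans hz.2)
    rw [this, hus] at hneg
    exact lt_irrefl _ hneg
  have hsq : 0 < Real.sqrt K := Real.sqrt_pos.2 hK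
  set k := Real.sqrt K with hk
  have hkk : k * k = K := Real.mul_self_sqrt hK.le
  have hcos : ∀ y ∈ Set.Icc x s, 0 < Real.cos (k * (y - x)) := by
    intro y hy
    apply Real.cos_pos_of_mem_Ioo
    have h4 : k * (y - x) < k * (Real.pi / (2 * k)) := by
      apply mul_lt_mul_of_pos_left _ hsq; linarith [hy.2]
    have h5 : k * (Real.pi / (2 * k)) = Real.pi / 2 := by field_simp
    have h6 : 0 ≤ k * (y - x) := mul_nonneg hsq.le (by linarith [hy.1])
    constructor <;> linarith [Real.pi_pos]
  have dcos : ∀ y, HasDerivAt (fun y => Real.cos (k * (y - x))) (-Real.sin (k * (y - x)) * k) y := by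
    intro y
    have := ((hasDerivAt_id y).sub_const x).const_mul k
    simpa using this.cos
  have dsin : ∀ y, HasDerivAt (fun y => Real.sin (k * (y - x))) (Real.cos (k * (y - x)) * k) y := by
    intro y
    have := ((hasDerivAt_id y).sub_const x).const_mul k
    simpa using this.sin
  have dW : ∀ y, HasDerivAt (fun y => deriv u y * Real.cos (k * (y - x)) + u y * (Real.sin (k * (y - x)) * k))
      ((K - θ y) * u y * Real.cos (k * (y - x))) y := by
    intro y
    have := ((du' y).hasDerivAt.mul (dcos y)).add ((du y).hasDerivAt.mul ((dsin y).mul_const k))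
    refine this.congr_deriv ?_
    linear_combination (Real.cos (k * (y - x))) * eu y + (u y * Real.cos (k * (y - x))) * hkk
  have mW : MonotoneOn (fun y => deriv u y * Real.cos (k * (y - x)) + u y * (Real.sin (k * (y - x)) * k)) (Set.Icc x s) := by
    apply monotoneOn_of_hasDerivWithinAt_nonneg (convex_Icc x s) 
      (fun y _ => (dW y).continuousAt.continuousWithinAt) (fun y _ => (dW y).hasDerivWithinAt)
    intro y hy
    have hy := interior_subset hy
    exact mul_nonneg (mul_nonneg (by linarith [hθ y]) (hpos y hy)) (hcos y hy).le
  have hW0 : ∀ y ∈ Set.Icc x s, 0 ≤ deriv u y * Real.cos (k * (y - x)) + u y * (Real.sin (k * (y - x)) * k) := by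
    intro y hy
    have := mW (Set.left_mem_Icc.2 hxs) hy hy.1
    simpa [h2] using this
  have dq : ∀ y ∈ Set.Icc x s, HasDerivAt (fun y => u y / Real.cos (k * (y - x)))
      ((deriv u y * Real.cos (k * (y - x)) - u y * (-Real.sin (k * (y - x)) * k)) / Real.cos (k * (y - x)) ^ 2) y :=
    fun y hy => (du y).hasDerivAt.div (dcos y) (hcos y hy).ne'
  have mq : MonotoneOn (fun y => u y / Real.cos (k * (y - x))) (Set.Icc x s) := by
    apply monotoneOn_of_hasDerivWithinAt_nonneg (convex_Icc x s) 
      (fun y hy => (dq y hy).continuousAt.continuousWithinAt)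
      (fun y hy => (dq y (interior_subset hy)).hasDerivWithinAt)
    intro y hy
    have hy := interior_subset hy
    apply div_nonneg _ (sq_nonneg _)
    linarith [hW0 y hy]
  have := mq (Set.left_mem_Icc.2 hxs) (Set.right_mem_Icc.2 hxs) hxs
  simp [h1, hus] at this
  linarith

lemma sturm {θ u : ℝ → ℝ} {K x : ℝ} (hK : 0 < K) (hθ : ∀ t, θ t ≤ K)
    (hu : IsSolution θ u) (h1 : u x = 1) (h2 : deriv u x = 0) (t : ℝ)
    (ht : |t - x| < Real.pi / (2 * Real.sqrt K)) : u t ≠ 0 := by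
  rw [abs_lt] at ht
  rcases le_total x t with h | h
  · exact sturm_right hK hθ hu h1 h2 t h (by linarith)
  · have d1 : deriv (fun y => u (2 * x - y)) = fun y => - deriv u (2 * x - y) := by
      ext y; exact deriv_comp_const_sub _ _ _
    have hu' : IsSolution (fun y => θ (2 * x - y)) (fun y => u (2 * x - y)) := by
      refine ⟨hu.1.comp (by fun_prop), fun y => ?_⟩
      rw [d1, deriv.fun_neg, deriv_comp_const_sub]
      simpa using hu.2 (2 * x - y)
    have := sturm_right (x := x) hK (fun y => hθ _) hu' (by simp [two_mul, h1]) 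
      (by rw [d1]; simp [two_mul, h2]) (2 * x - t) (by linarith) (by linarith)
    simpa using this

lemma hyp_diff {f₁ : ℝ → ℝ} {H : ℂ → ℂ} {R : ℝ} (hc : Continuous f₁)
    (hH : DifferentiableOn ℂ H {z : ℂ | |z.im| < R ∧ ∀ t : ℝ, f₁ t = 0 → z ≠ (t : ℂ)})
    (z : ℂ) (hz : |z.im| < R) (hz' : z.im = 0 → f₁ z.re ≠ 0) : DifferentiableAt ℂ H z := by
  apply hH.differentiableAt
  have h1 : IsOpen {z : ℂ | |z.im| < R} :=
    isOpen_lt (by fun_prop) continuous_const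
  have h2 : IsOpen ({z : ℂ | z.im ≠ 0} ∪ {z : ℂ | f₁ z.re ≠ 0}) :=
    (isOpen_ne_fun (by fun_prop) continuous_const).union
      (isOpen_ne_fun (hc.comp Complex.continuous_re) continuous_const)
  refine Filter.mem_of_superset ((h1.inter h2).mem_nhds ⟨hz, ?_⟩) ?_
  · by_cases h : z.im = 0
    · exact Or.inr (hz' h)
    · exact Or.inl h
  · rintro w ⟨hw1, hw2⟩
    refine ⟨hw1, fun t ht hwt => ?_⟩
    rw [hwt] at hw2
    simp [ht] at hw2

lemma hyp_symm {f₁ f₂ : ℝ → ℝ} {H : ℂ → ℂ} {R : ℝ} (hR : 0 < R) (hc : Continuous f₁)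
    (hH : DifferentiableOn ℂ H {z : ℂ | |z.im| < R ∧ ∀ t : ℝ, f₁ t = 0 → z ≠ (t : ℂ)})
    (hreal : ∀ t : ℝ, f₁ t ≠ 0 → H t = ((f₂ t / f₁ t : ℝ) : ℂ))
    (t₀ : ℝ) (ht₀ : f₁ t₀ ≠ 0) (z : ℂ) (hz : |z.im| < R) (hz' : z.im ≠ 0) :
    H (starRingEnd ℂ z) = starRingEnd ℂ (H z) := by
  obtain ⟨ε, hε, hball⟩ := Metric.eventually_nhds_iff.1 (hc.continuousAt.eventually_ne ht₀)
  set D : Set ℂ := {z : ℂ | |z.im| < R} ∩ ({z : ℂ | z.im ≠ 0} ∪ {z : ℂ | |z.re - t₀| < ε}) with hD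
  have hDo : IsOpen D := by
    apply IsOpen.inter
    · exact isOpen_lt (by fun_prop) continuous_const
    · exact (isOpen_ne_fun (by fun_prop) continuous_const).union
        (isOpen_lt (by fun_prop) continuous_const)
  have hdiff : ∀ w ∈ D, DifferentiableAt ℂ H w := by
    rintro w ⟨hw1, hw2⟩
    refine hyp_diff hc hH w hw1 fun h => ?_
    rcases hw2 with h2 | h2
    · exact absurd h h2
    · exact hball (by rwa [Real.dist_eq])
  have ht₀D : (t₀ : ℂ) ∈ D := ⟨by simpa using hR, Or.inr (by simpa using hε)⟩
  have hstar : StarConvex ℝ (t₀ : ℂ) D := by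
    rw [starConvex_iff_forall_pos ht₀D]
    rintro w ⟨hw1, hw2⟩ a b ha hb hab
    have him : (a • (t₀ : ℂ) + b • w).im = b * w.im := by simp
    have hre : (a • (t₀ : ℂ) + b • w).re - t₀ = b * (w.re - t₀) := by
      simp; linear_combination t₀ * hab
    refine ⟨?_, ?_⟩
    · show |_| < R
      rw [him, abs_mul, abs_of_pos hb]
      have : |w.im| < R := hw1
      nlinarith [abs_nonneg w.im]
    · rcases hw2 with h2 | h2
      · left; show _ ≠ _
        rw [him]; exact mul_ne_zero hb.ne' h2
      · right; show |_| < ε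
        rw [hre, abs_mul, abs_of_pos hb]
        have : |w.re - t₀| < ε := h2
        nlinarith [abs_nonneg (w.re - t₀)]
  have hpre : IsPreconnected D := (hstar.isPathConnected ht₀D).isConnected.isPreconnected
  have hconjD : ∀ w ∈ D, starRingEnd ℂ w ∈ D := by
    rintro w ⟨hw1, hw2⟩
    exact ⟨by simpa using hw1, by simpa using hw2⟩
  have a1 : AnalyticOnNhd ℂ H D :=
    DifferentiableOn.analyticOnNhd (fun w hw => (hdiff w hw).differentiableWithinAt) hDo
  have a2 : AnalyticOnNhd ℂ (starRingEnd ℂ ∘ H ∘ starRingEnd ℂ) D :=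
    DifferentiableOn.analyticOnNhd (fun w hw => by
      have h := (hdiff _ (hconjD w hw)).conj_conj
      rw [Complex.conj_conj] at h
      exact h.differentiableWithinAt) hDo
  have hfreq : ∃ᶠ w in nhdsWithin (t₀ : ℂ) {(t₀ : ℂ)}ᶜ, H w = (starRingEnd ℂ ∘ H ∘ starRingEnd ℂ) w := by
    have ht : Filter.Tendsto (fun s : ℝ => (s : ℂ)) (nhdsWithin t₀ {t₀}ᶜ) (nhdsWithin (t₀ : ℂ) {(t₀ : ℂ)}ᶜ) := by
      apply Complex.continuous_ofReal.continuousAt.continuousWithinAt.tendsto_nhdsWithin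
      intro s hs
      simpa using hs
    apply ht.frequently
    apply Filter.Eventually.frequently
    have h3 : ∀ᶠ s in nhdsWithin t₀ {t₀}ᶜ, f₁ s ≠ 0 :=
      (hc.continuousAt.eventually_ne ht₀).filter_mono nhdsWithin_le_nhds
    filter_upwards [h3] with s hs
    simp only [Function.comp, Complex.conj_ofReal]
    rw [hreal s hs, Complex.conj_ofReal]
  have hE := a1.eqOn_of_preconnected_of_frequently_eq a2 hpre ht₀D hfreq
  have := hE (⟨hz, Or.inl hz'⟩ : z ∈ D)
  simp only [Function.comp] at this
  rw [this, Complex.conj_conj]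

lemma exists_Hx_s5 {θ : ℝ → ℝ} {R x : ℝ} {u v : ℝ → ℝ} (hR : 0 < R) (hyp : HypR θ R)
    (hF : IsFundPair θ x u v) : ∃ Hx : ℂ → ℂ,
      (∀ s : ℝ, Hx s = ((v s / u s : ℝ) : ℂ)) ∧
      (∀ z : ℂ, |z.im| < R → (z.im = 0 → u z.re ≠ 0) → DifferentiableAt ℂ Hx z) ∧
      (∀ z : ℂ, |z.im| < R → 0 ≤ (Hx z).im * z.im) := by
  obtain ⟨f₁, f₂, H, s1, s2, hW, hreal, hH, hpole, hpos⟩ := hyp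
  obtain ⟨su, sv, u0, u1, v0, v1⟩ := hF
  set W := f₁ 0 * deriv f₂ 0 - deriv f₁ 0 * f₂ 0 with hWdef
  have hWt : ∀ t, f₁ t * deriv f₂ t - deriv f₁ t * f₂ t = W := fun t => wronsk_const s1 s2 t 0
  have c1 : Continuous f₁ := s1.1.continuous
  have cu : Continuous u := su.1.continuous
  -- coefficients
  have hcomb : ∀ y : ℝ → ℝ, IsSolution θ y → ∃ a b : ℝ, (∀ t, y t = a * f₂ t + b * f₁ t) ∧
      (∀ t, deriv y t = a * deriv f₂ t + b * deriv f₁ t) := by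
    intro y sy
    refine ⟨(f₁ 0 * deriv y 0 - deriv f₁ 0 * y 0) / W, (y 0 * deriv f₂ 0 - deriv y 0 * f₂ 0) / W,
      fun t => ?_, fun t => ?_⟩
    · rw [← wronsk_const s1 sy t 0, ← wronsk_const sy s2 t 0]
      field_simp
      rw [← hWt t]; ring
    · rw [← wronsk_const s1 sy t 0, ← wronsk_const sy s2 t 0]
      field_simp
      rw [← hWt t]; ring
  obtain ⟨p, q, hu, hu'⟩ := hcomb u su
  obtain ⟨a, b, hv, hv'⟩ := hcomb v sv
  have hdet : (a * q - b * p) * W = 1 := by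
    have e1 : u x * deriv v x - deriv u x * v x = 1 := by rw [u0, u1, v0, v1]; ring
    rw [← e1, ← hWt x, hu, hv, hu', hv']; ring
  -- a nonzero point
  obtain ⟨t₀, ht₀⟩ : ∃ t₀, f₁ t₀ ≠ 0 := by
    by_contra hcon
    push Not at hcon
    apply hW
    have : f₁ = fun _ => 0 := funext hcon
    rw [hWdef, this]; simp
  have hsymm := hyp_symm hR c1 hH hreal t₀ ht₀
  have hdiff := hyp_diff c1 hH
  -- sign of Im H
  have hImpos : ∀ z : ℂ, |z.im| < R → z.im ≠ 0 → 0 < W * (H z).im * z.im := by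
    intro z hz hz'
    rcases lt_or_gt_of_ne hz' with h | h
    · have h1 := hpos (starRingEnd ℂ z) (by simpa using h) (by rw [abs_of_neg h] at hz; simpa using hz)
      rw [hsymm z hz hz'] at h1
      simpa using h1
    · exact hpos z h (by rwa [abs_of_pos h] at hz)
  have hden : ∀ z : ℂ, |z.im| < R → z.im ≠ 0 → (p : ℂ) * H z + q ≠ 0 := by
    intro z hz hz' h0
    have him : (H z).im ≠ 0 := by
      intro h; have := hImpos z hz hz'; rw [h] at this; simp at this
    have h1 := congrArg Complex.im h0
    simp [him] at h1
    have h2 := congrArg Complex.re h0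
    simp [h1] at h2
    rw [h1, h2] at hdet; simp at hdet
  have hmob : ∀ s : ℝ, f₁ s ≠ 0 → ((a : ℂ) * H s + b) / (p * H s + q) = ((v s / u s : ℝ) : ℂ) := by
    intro s hs
    rw [hreal s hs, hu s, hv s]
    norm_cast
    rw [show a * (f₂ s / f₁ s) + b = (a * f₂ s + b * f₁ s) / f₁ s by field_simp,
      show p * (f₂ s / f₁ s) + q = (p * f₂ s + q * f₁ s) / f₁ s by field_simp, div_div_div_cancel_right₀ hs]
  let Hx : ℂ → ℂ := fun z => if z.im = 0 then ((v z.re / u z.re : ℝ) : ℂ) else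
    ((a : ℂ) * H z + b) / (p * H z + q)
  have hHx1 : ∀ s : ℝ, Hx s = ((v s / u s : ℝ) : ℂ) := fun s => by simp [Hx]
  have hHx2 : ∀ z : ℂ, (z.im = 0 → f₁ z.re ≠ 0) → Hx z = ((a : ℂ) * H z + b) / (p * H z + q) := by
    intro z hz
    by_cases h : z.im = 0
    · have hz1 : z = ((z.re : ℝ) : ℂ) := by apply Complex.ext <;> simp [h]
      rw [hz1, hHx1, hmob _ (hz h)]
    · simp only [Hx, if_neg h]
  have hopen : IsOpen ({z : ℂ | |z.im| < R} ∩ ({z : ℂ | z.im ≠ 0} ∪ {z : ℂ | f₁ z.re ≠ 0})) :=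
    IsOpen.inter (isOpen_lt (by fun_prop) continuous_const) <|
    (isOpen_ne_fun (by fun_prop) continuous_const).union
      (isOpen_ne_fun (c1.comp Complex.continuous_re) continuous_const)
  -- differentiability off the zeros
  have hd1 : ∀ z : ℂ, |z.im| < R → (z.im = 0 → f₁ z.re ≠ 0) → (z.im = 0 → u z.re ≠ 0) →
      DifferentiableAt ℂ Hx z := by
    intro z hz hz1 hz2
    have hev : Hx =ᶠ[nhds z] fun z => ((a : ℂ) * H z + b) / (p * H z + q) := by
      filter_upwards [hopen.mem_nhds ⟨hz, (by by_cases h : z.im = 0; exacts [Or.inr (hz1 h), Or.inl h])⟩] with w hw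
      exact hHx2 w fun h => (hw.2.resolve_left (by simpa using h))
    rw [hev.differentiableAt_iff]
    have hdz := hdiff z hz hz1
    refine ((hdz.const_mul _).add_const _).div ((hdz.const_mul _).add_const _) ?_
    by_cases h : z.im = 0
    · have hz3 : z = ((z.re : ℝ) : ℂ) := by apply Complex.ext <;> simp [h]
      rw [hz3, hreal _ (hz1 h)]
      norm_cast
      have h4 := hz2 h
      rw [hu] at h4
      have h5 := hz1 h
      intro h6
      field_simp at h6
      exact h4 (by linarith)
    · exact hden z hz h
  refine ⟨Hx, hHx1, ?_, ?_⟩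
  · intro z hz hz2
    by_cases hz1 : z.im = 0 → f₁ z.re ≠ 0
    · exact hd1 z hz hz1 hz2
    push Not at hz1
    obtain ⟨him, hf0⟩ := hz1
    have hus := hz2 him
    obtain ⟨s, rfl⟩ : ∃ s : ℝ, z = s := ⟨z.re, by apply Complex.ext <;> simp [him]⟩
    simp only [Complex.ofReal_re] at hf0 hus
    have hf2 : f₂ s ≠ 0 := by
      intro h; rw [hu, h, hf0] at hus; simp at hus
    have hp : p ≠ 0 := by
      intro h; rw [hu, h, hf0] at hus; simp at hus
    have hd0 : deriv f₁ s ≠ 0 := by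
      intro h; apply hW; rw [← hWt s, h, hf0]; ring
    -- isolated zero
    have hiso : ∀ᶠ y in nhdsWithin s {s}ᶜ, f₁ y ≠ 0 := by
      have := (s1.1.differentiable (by simp) s).hasDerivAt.eventually_ne hd0 (c := 0)
      exact this
    have hiso' : ∀ᶠ w : ℂ in nhdsWithin (s : ℂ) {(s : ℂ)}ᶜ, |w.im| < R ∧ (w.im = 0 → f₁ w.re ≠ 0) ∧
        (w.im = 0 → u w.re ≠ 0) := by
      have e1 : ∀ᶠ w : ℂ in nhds (s : ℂ), |w.im| < R :=
        (isOpen_lt (by fun_prop) continuous_const : IsOpen {w : ℂ | |w.im| < R}).mem_nhds (by simpa using hR)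
      have e2 : ∀ᶠ w : ℂ in nhds (s : ℂ), u w.re ≠ 0 :=
        (isOpen_ne_fun (cu.comp Complex.continuous_re) continuous_const).mem_nhds (by simpa using hus)
      rw [eventually_nhdsWithin_iff] at hiso ⊢
      have e3 : Filter.Tendsto Complex.re (nhds (s : ℂ)) (nhds s) := Complex.continuous_re.tendsto (s : ℂ)
      filter_upwards [e1, e2, e3.eventually hiso] with w h1 h2 h3 hne
      refine ⟨h1, fun h => h3 ?_, fun _ => h2⟩
      intro h4
      exact hne (Complex.ext h4 (by simpa using h))
    refine (Complex.analyticAt_of_differentiable_on_punctured_nhds_of_continuousAt ?_ ?_).differentiableAt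
    · filter_upwards [hiso'] with w hw
      exact hd1 w hw.1 hw.2.1 hw.2.2
    · rw [continuousAt_iff_punctured_nhds]
      have hval : Hx s = (a : ℂ) / p := by
        rw [hHx1, hu, hv, hf0]
        norm_cast
        field_simp
        ring
      rw [hval]
      have hinf : Filter.Tendsto (fun w => (p : ℂ) * H w + q) (nhdsWithin (s : ℂ) {(s : ℂ)}ᶜ) (Bornology.cobounded ℂ) := by
        have h1 := hpole s hf0
        rw [tendsto_norm_atTop_iff_cobounded] at h1
        have h2 : Filter.Tendsto (fun w => (p : ℂ) * H w) (nhdsWithin (s : ℂ) {(s : ℂ)}ᶜ) (Bornology.cobounded ℂ) := by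
          rw [← tendsto_norm_atTop_iff_cobounded] at h1 ⊢
          simp only [norm_mul]
          exact h1.const_mul_atTop (by simpa using hp)
        rw [← tendsto_norm_atTop_iff_cobounded] at h2 ⊢
        refine Filter.tendsto_atTop_mono (fun w => ?_) (Filter.tendsto_atTop_add_const_right _ (-‖(q:ℂ)‖) h2)
        have := norm_sub_le ((p : ℂ) * H w + q) q
        simp only [add_sub_cancel_right] at this
        linarith
      have hlim : Filter.Tendsto (fun w => (a : ℂ) / p + (b - a * q / p) * ((p : ℂ) * H w + q)⁻¹) (nhdsWithin (s : ℂ) {(s : ℂ)}ᶜ) (nhds ((a : ℂ) / p + (b - a * q / p) * 0)) :=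
        ((Filter.tendsto_inv₀_cobounded.comp hinf).const_mul _).const_add _
      rw [mul_zero, add_zero] at hlim
      refine hlim.congr' ?_
      have hne0 : ∀ᶠ w in nhdsWithin (s : ℂ) {(s : ℂ)}ᶜ, (p : ℂ) * H w + q ≠ 0 := by
        have := (tendsto_norm_atTop_iff_cobounded.2 hinf).eventually_gt_atTop 0
        filter_upwards [this] with w hw
        exact norm_pos_iff.1 hw
      filter_upwards [hiso', hne0] with w hw hw0
      rw [hHx2 w hw.2.1]
      have hpc : (p : ℂ) ≠ 0 := by exact_mod_cast hp
      field_simp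
      ring
  · intro z hz
    by_cases h : z.im = 0
    · rw [h, mul_zero]
    · simp only [Hx, if_neg h]
      have h1 := hImpos z hz h
      have h2 := hden z hz h
      have h3 : (((a : ℂ) * H z + b) / (p * H z + q)).im = (a * q - b * p) * (H z).im / Complex.normSq (p * H z + q) := by
        rw [Complex.div_im]
        simp
        ring
      have h4 : 0 < Complex.normSq (p * H z + q) := Complex.normSq_pos.2 h2
      have h5 : 0 ≤ (a * q - b * p) * (H z).im * z.im := by
        have : (a * q - b * p) * (H z).im * z.im = (a * q - b * p) ^ 2 * (W * (H z).im * z.im) := by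
          linear_combination (-(a * q - b * p) * (H z).im * z.im) * hdet
        rw [this]; positivity
      rw [h3, div_mul_eq_mul_div]
      positivity

lemma iteratedDeriv_of_hasSum {F : ℝ → ℝ} {a : ℕ → ℝ}
    (h : ∀ᶠ t in nhds (0:ℝ), HasSum (fun n => t ^ n * a n) (F t)) (n : ℕ) :
    iteratedDeriv n F 0 = (Nat.factorial n : ℝ) * a n := by
  have h1 : HasFPowerSeriesAt F (FormalMultilinearSeries.ofScalars ℝ a) 0 := by
    rw [hasFPowerSeriesAt_iff]
    filter_upwards [h] with t ht
    simpa [FormalMultilinearSeries.coeff_ofScalars] using ht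
  have h2 := h1.analyticAt.hasFPowerSeriesAt
  have h3 := congrArg (fun p => FormalMultilinearSeries.coeff p n) (h1.eq_formalMultilinearSeries h2)
  simp only [FormalMultilinearSeries.coeff_ofScalars] at h3
  rw [h3]
  have : (Nat.factorial n : ℝ) ≠ 0 := by positivity
  field_simp

lemma one_add_sq_ne {z : ℂ} (hz : ‖z‖ < 1) : 1 + z ^ 2 ≠ 0 := by
  intro h
  have h1 : z ^ 2 = -1 := by linear_combination h
  have h2 : ‖z‖ ^ 2 = 1 := by rw [← norm_pow, h1]; simp
  nlinarith [norm_nonneg z]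

lemma joukowski_im {z : ℂ} :
    (2 * z / (1 + z ^ 2)).im = 2 * z.im * (1 - Complex.normSq z) / Complex.normSq (1 + z ^ 2) := by
  rw [Complex.div_im]
  simp [pow_two, Complex.normSq_apply]
  ring

lemma joukowski_real {z : ℝ} (hz : |z| < 1) : |2 * z / (1 + z ^ 2)| < 1 := by
  rw [abs_lt] at *
  have : 0 < 1 + z ^ 2 := by positivity
  constructor
  · rw [lt_div_iff₀ this]; nlinarith
  · rw [div_lt_iff₀ this]; nlinarith

lemma main_disc {θ : ℝ → ℝ} {R x K c : ℝ} {u v : ℝ → ℝ} (hR : 0 < R) (hyp : HypR θ R)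
    (hθ : ∀ t, θ t ≤ K) (hKpos : 0 < K)
    (hc : c = Real.pi / (R * (1 - Real.exp (-(Real.pi ^ 2) / (2 * R * Real.sqrt K)))))
    (hF : IsFundPair θ x u v) :
    ∃ μ : Measure ℝ, IsFiniteMeasure μ ∧ 0 < c ∧ ∀ z : ℝ, |z| < 1 →
      v (x + gR R (c⁻¹ * (2 * z / (1 + z ^ 2)))) / u (x + gR R (c⁻¹ * (2 * z / (1 + z ^ 2)))) =
        ∫ θ, z / (1 - 2 * z * Real.cos θ + z ^ 2) ∂μ := by
  obtain ⟨Hx, hx1, hx2, hx3⟩ := exists_Hx_s5 hR hyp hF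
  have hsq : 0 < Real.sqrt K := Real.sqrt_pos.2 hKpos
  have hpi := Real.pi_pos
  set A : ℝ := Real.pi ^ 2 / (2 * R * Real.sqrt K) with hA
  have hApos : 0 < A := by positivity
  rw [neg_div, ← hA] at hc
  set E : ℝ := Real.exp (-A) with hE
  have hE0 : 0 < E := Real.exp_pos _
  have hE1 : E < 1 := by rw [hE, Real.exp_lt_one_iff]; linarith
  have hcpos : 0 < c := by
    rw [hc]; have : 0 < 1 - E := by linarith
    positivity
  have hkc : Real.pi / R * c⁻¹ = 1 - E := by
    rw [hc]; have : 1 - E ≠ 0 := by linarith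
    field_simp
  set L : ℂ → ℂ := fun z => 1 - ((1 - E : ℝ) : ℂ) * (2 * z / (1 + z ^ 2)) with hL
  set Z : ℂ → ℂ := fun z => x - ((R / Real.pi : ℝ) : ℂ) * Complex.log (L z) with hZ
  have hLim : ∀ z : ℂ, (L z).im = - ((1 - E) * (2 * z.im * (1 - Complex.normSq z) / Complex.normSq (1 + z ^ 2))) := by
    intro z
    simp only [hL, Complex.sub_im, Complex.one_im, Complex.im_ofReal_mul, joukowski_im]; ring
  have hZim : ∀ z : ℂ, (Z z).im = - (R / Real.pi * (L z).arg) := by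
    intro z
    simp only [hZ, Complex.sub_im, Complex.ofReal_im, Complex.im_ofReal_mul, Complex.log_im]; ring
  have hq : ∀ z : ℂ, ‖z‖ < 1 → 0 < (1 - Complex.normSq z) / Complex.normSq (1 + z ^ 2) := by
    intro z hz
    apply div_pos _ (Complex.normSq_pos.2 (one_add_sq_ne hz))
    rw [Complex.normSq_eq_norm_sq]; nlinarith [norm_nonneg z]
  have hLre : ∀ s : ℝ, L s = ((1 - (1 - E) * (2 * s / (1 + s ^ 2)) : ℝ) : ℂ) := by
    intro s; simp only [hL]; push_cast; ring
  have hLlo : ∀ s : ℝ, |s| < 1 → E < 1 - (1 - E) * (2 * s / (1 + s ^ 2)) := by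
    intro s hs
    have := (abs_lt.1 (joukowski_real hs)).2
    nlinarith
  have hLhi : ∀ s : ℝ, |s| < 1 → 1 - (1 - E) * (2 * s / (1 + s ^ 2)) < 2 - E := by
    intro s hs
    have := (abs_lt.1 (joukowski_real hs)).1
    nlinarith
  have hnorm : ∀ z : ℂ, ‖z‖ < 1 → z.im = 0 → ∃ s : ℝ, z = s ∧ |s| < 1 := by
    intro z hz h
    have : z = ((z.re : ℝ) : ℂ) := by apply Complex.ext <;> simp [h]
    refine ⟨z.re, this, ?_⟩
    rw [this, Complex.norm_real] at hz
    exact hz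
  have hslit : ∀ z : ℂ, ‖z‖ < 1 → L z ∈ Complex.slitPlane := by
    intro z hz
    by_cases h : z.im = 0
    · obtain ⟨s, rfl, hs⟩ := hnorm z hz h
      rw [hLre, Complex.ofReal_mem_slitPlane]
      linarith [hLlo s hs]
    · apply Or.inr
      rw [hLim, mul_div_assoc]
      have h1 := hq z hz
      have h2 : 1 - E ≠ 0 := by linarith
      exact neg_ne_zero.2 (mul_ne_zero h2 (mul_ne_zero (mul_ne_zero two_ne_zero h) h1.ne'))
  have hZlt : ∀ z : ℂ, ‖z‖ < 1 → |(Z z).im| < R := by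
    intro z hz
    have h1 : |(L z).arg| < Real.pi := by
      rw [abs_lt]
      exact ⟨Complex.neg_pi_lt_arg _, lt_of_le_of_ne (Complex.arg_le_pi _) (Complex.mem_slitPlane_iff_arg.1 (hslit z hz)).1⟩
    rw [hZim, abs_neg, abs_mul, abs_of_pos (by positivity : 0 < R / Real.pi)]
    calc R / Real.pi * |(L z).arg| < R / Real.pi * Real.pi := by gcongr
      _ = R := by field_simp
  have hsign : ∀ z : ℂ, ‖z‖ < 1 → z.im ≠ 0 → 0 < (Z z).im * z.im := by
    intro z hz h
    have h1 := hq z hz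
    have hRp : 0 < R / Real.pi := by positivity
    have hE2 : 0 < 1 - E := by linarith
    have h4 := hLim z
    rw [mul_div_assoc] at h4
    rcases lt_or_gt_of_ne h with h | h
    · have h2 : 0 < (L z).im := by
        rw [h4]
        have : 0 < -z.im := by linarith
        have : 0 < (1 - E) * (2 * (-z.im) * ((1 - Complex.normSq z) / Complex.normSq (1 + z ^ 2))) := by positivity
        linarith
      have h3 : 0 < (L z).arg := by
        refine lt_of_le_of_ne (Complex.arg_nonneg_iff.2 h2.le) fun h5 => ?_
        have := (Complex.arg_eq_zero_iff.1 h5.symm).2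
        exact h2.ne' this
      rw [hZim]
      have := mul_pos hRp h3
      nlinarith
    · have h2 : (L z).im < 0 := by
        rw [h4]
        have : 0 < (1 - E) * (2 * (z.im) * ((1 - Complex.normSq z) / Complex.normSq (1 + z ^ 2))) := by positivity
        linarith
      have h3 : (L z).arg < 0 := Complex.arg_neg_iff.2 h2
      rw [hZim]
      have := mul_neg_of_pos_of_neg hRp h3
      nlinarith
  have hZre : ∀ s : ℝ, |s| < 1 → Z s = ((x - R / Real.pi * Real.log (1 - (1 - E) * (2 * s / (1 + s ^ 2))) : ℝ) : ℂ) := by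
    intro s hs
    simp only [hZ]
    rw [hLre, ← Complex.ofReal_log (by linarith [hLlo s hs])]
    push_cast; ring
  have hne : ∀ z : ℂ, ‖z‖ < 1 → (Z z).im = 0 → u (Z z).re ≠ 0 := by
    intro z hz h
    have hzi : z.im = 0 := by
      by_contra hcon
      have := hsign z hz hcon
      rw [h, zero_mul] at this
      exact lt_irrefl _ this
    obtain ⟨s, rfl, hs⟩ := hnorm z hz hzi
    rw [hZre s hs, Complex.ofReal_re]
    apply sturm hKpos hθ hF.1 hF.2.2.1 hF.2.2.2.1
    have hlog : |Real.log (1 - (1 - E) * (2 * s / (1 + s ^ 2)))| < A := by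
      have hlo := hLlo s hs
      have hhi := hLhi s hs
      have hp : 0 < 1 - (1 - E) * (2 * s / (1 + s ^ 2)) := by linarith
      rw [abs_lt]
      constructor
      · rw [Real.lt_log_iff_exp_lt hp]; exact hlo
      · rw [Real.log_lt_iff_lt_exp hp]
        refine lt_of_lt_of_le hhi ?_
        have : Real.exp A * E = 1 := by rw [hE, ← Real.exp_add]; simp
        nlinarith [sq_nonneg (1 - E)]
    rw [show ∀ y : ℝ, x - R / Real.pi * y - x = - (R / Real.pi * y) by intro y; ring, abs_neg, abs_mul, abs_of_pos (by positivity : 0 < R / Real.pi)]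
    calc R / Real.pi * |Real.log (1 - (1 - E) * (2 * s / (1 + s ^ 2)))| < R / Real.pi * A := by gcongr
      _ = Real.pi / (2 * Real.sqrt K) := by rw [hA]; field_simp
  obtain ⟨μ, hμ, hrep⟩ := herglotz_aux (fun z => Hx (Z z)) (by
      intro z hz
      have hz : ‖z‖ < 1 := by simpa using hz
      have h1 := hx2 (Z z) (hZlt z hz) (hne z hz)
      apply DifferentiableAt.differentiableWithinAt
      apply h1.comp z
      simp only [hZ]
      have hLd : DifferentiableAt ℂ L z := by
        simp only [hL]
        have := one_add_sq_ne hz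
        fun_prop (disch := assumption)
      exact ((hLd.clog (hslit z hz)).const_mul _).const_sub _) (by
      have h1 := hZre 0 (by simp)
      simp only [Complex.ofReal_zero] at h1
      simp only [h1, hx1]
      simp [hF.2.2.2.2.1]) (by
      intro z hz
      have hz : ‖z‖ < 1 := by simpa using hz
      by_cases h : z.im = 0
      · rw [h, mul_zero]
      · have h1 := hx3 (Z z) (hZlt z hz)
        have h2 := hsign z hz h
        have h3 : 0 ≤ ((Hx (Z z)).im * z.im) * ((Z z).im * (Z z).im) := by
          have := mul_nonneg h1 h2.le
          linarith
        have h4 : (Z z).im ≠ 0 := fun h => by rw [h, zero_mul] at h2; exact lt_irrefl _ h2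
        have h5 : 0 < (Z z).im * (Z z).im := mul_self_pos.2 h4
        exact nonneg_of_mul_nonneg_left h3 h5)
  refine ⟨μ, hμ, hcpos, fun z hz => ?_⟩
  rw [← hrep z hz, hZre z hz, hx1, Complex.ofReal_re]
  have : x + gR R (c⁻¹ * (2 * z / (1 + z ^ 2))) = x - R / Real.pi * Real.log (1 - (1 - E) * (2 * z / (1 + z ^ 2))) := by
    simp only [gR]
    rw [← mul_assoc, hkc]; ring
  rw [this]

theorem stmt5 (θ : ℝ → ℝ) (hθ : ContDiff ℝ (⊤ : ℕ∞) θ) (R : ℝ) (hR : 0 < R)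
    (hHyp : HypR θ R) (hbdd : BddAbove (Set.range θ))
    (K : ℝ) (hK : K = sSup (Set.range θ)) (hKpos : 0 < K)
    (c : ℝ) (hc : c = Real.pi / (R * (1 - Real.exp (-(Real.pi ^ 2) / (2 * R * Real.sqrt K))))) :
    ∀ (x : ℝ) (f₁ f₂ : ℝ → ℝ), IsFundPair θ x f₁ f₂ →
      ∃ μ : Measure ℝ, IsFiniteMeasure μ ∧
        μ (Set.Icc (-c) c)ᶜ = 0 ∧
        ∀ n : ℕ, 1 ≤ n →
          SchR R x f₁ f₂ n = (Nat.factorial n : ℝ) * ∫ t : ℝ, t ^ (n - 1) ∂μ := by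
  intro x u v hF
  have hle : ∀ t, θ t ≤ K := fun t => by rw [hK]; exact le_csSup hbdd ⟨t, rfl⟩
  obtain ⟨ν, hν, hcpos, hrep⟩ := main_disc hR hHyp hle hKpos hc hF
  have hcm : Measurable fun y : ℝ => c * Real.cos y := (by fun_prop : Continuous fun y : ℝ => c * Real.cos y).measurable
  have hbound : ∀ y : ℝ, |c * Real.cos y| ≤ c := by
    intro y
    rw [abs_mul, abs_of_pos hcpos]
    nlinarith [Real.abs_cos_le_one y]
  have hmint : ∀ k : ℕ, ∫ t : ℝ, t ^ k ∂((c / 2).toNNReal • ν.map (fun y => c * Real.cos y)) =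
      c / 2 * ∫ y, (c * Real.cos y) ^ k ∂ν := by
    intro k
    rw [integral_smul_nnreal_measure, integral_map hcm.aemeasurable (by fun_prop), NNReal.smul_def,
      Real.coe_toNNReal _ (by positivity), smul_eq_mul]
  refine ⟨(c / 2).toNNReal • ν.map (fun y => c * Real.cos y), inferInstance, ?_, ?_⟩
  · rw [Measure.smul_apply, Measure.map_apply hcm measurableSet_Icc.compl]
    have : (fun y : ℝ => c * Real.cos y) ⁻¹' (Set.Icc (-c) c)ᶜ = ∅ := by
      ext y
      simp only [Set.mem_preimage, Set.mem_compl_iff, Set.mem_empty_iff_false, iff_false, not_not]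
      exact abs_le.1 (hbound y)
    rw [this]; simp
  intro n hn
  let a : ℕ → ℝ := fun n => match n with
    | 0 => 0
    | k + 1 => c / 2 * ∫ y, (c * Real.cos y) ^ k ∂ν
  have hsum : ∀ᶠ t in nhds (0:ℝ), HasSum (fun n => t ^ n * a n) (v (x + gR R t) / u (x + gR R t)) := by
    have : ∀ᶠ t in nhds (0:ℝ), |t| < c⁻¹ := by
      have := Metric.ball_mem_nhds (0:ℝ) (inv_pos.2 hcpos)
      filter_upwards [this] with t ht
      simpa using ht
    filter_upwards [this] with t ht
    have hct : |c * t| < 1 := by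
      rw [abs_mul, abs_of_pos hcpos]
      calc c * |t| < c * c⁻¹ := by gcongr
        _ = 1 := by field_simp
    have hct2 : (c * t) ^ 2 < 1 := by rw [← sq_abs]; nlinarith [abs_nonneg (c * t)]
    set q := Real.sqrt (1 - (c * t) ^ 2) with hq
    have hq2 : q ^ 2 = 1 - (c * t) ^ 2 := Real.sq_sqrt (by linarith)
    have hq0 : 0 < q := Real.sqrt_pos.2 (by linarith)
    set z := c * t / (1 + q) with hz
    have hz1 : |z| < 1 := by
      rw [hz, abs_div, abs_of_pos (by linarith : 0 < 1 + q), div_lt_one (by linarith)]; linarith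
    have hzt : 2 * z / (1 + z ^ 2) = c * t := by
      have h1 : (1 + q) ≠ 0 := by linarith
      have h2 : 1 + z ^ 2 = 2 / (1 + q) := by
        rw [hz, div_pow]; field_simp; nlinarith
      rw [h2, hz]; field_simp
    have h3 := hrep z hz1
    rw [hzt, inv_mul_cancel_left₀ hcpos.ne'] at h3
    rw [h3]
    have h4 : ∀ y : ℝ, z / (1 - 2 * z * Real.cos y + z ^ 2) = c / 2 * t * (1 - c * Real.cos y * t)⁻¹ := by
      intro y
      have h5 : 0 < 1 + z ^ 2 := by positivity
      have h6 : 1 - 2 * z * Real.cos y + z ^ 2 = (1 + z ^ 2) * (1 - c * Real.cos y * t) := by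
        have : 2 * z = c * t * (1 + z ^ 2) := by rw [← hzt]; field_simp
        linear_combination (-Real.cos y) * this
      have h7 : z = c / 2 * t * (1 + z ^ 2) := by
        have : 2 * z = c * t * (1 + z ^ 2) := by rw [← hzt]; field_simp
        linarith
      rw [h6]
      nth_rewrite 1 [h7]
      rw [div_eq_mul_inv, mul_inv]
      field_simp
    simp only [h4]
    rw [← hasSum_nat_add_iff' 1]
    simp only [Finset.range_one, Finset.sum_singleton, pow_zero, one_mul]
    have ha0 : a 0 = 0 := rfl
    rw [ha0, sub_zero]
    have h8 : ∀ k : ℕ, t ^ (k + 1) * a (k + 1) = ∫ y, c / 2 * t * (c * Real.cos y * t) ^ k ∂ν := by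
      intro k
      show t ^ (k + 1) * (c / 2 * ∫ y, (c * Real.cos y) ^ k ∂ν) = _
      rw [← mul_assoc, ← integral_const_mul]
      congr 1
      ext y
      ring
    simp only [h8]
    have h9 : ∀ y : ℝ, |c * Real.cos y * t| ≤ |c * t| := by
      intro y
      rw [abs_mul, abs_mul c t, abs_of_pos hcpos]
      gcongr
      exact hbound y
    apply hasSum_integral_of_dominated_convergence (fun k _ => |c / 2 * t| * |c * t| ^ k)
    · intro k; exact (by fun_prop : Continuous fun y : ℝ => c / 2 * t * (c * Real.cos y * t) ^ k).aestronglyMeasurable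
    · intro k
      filter_upwards with y
      rw [norm_mul, norm_pow, Real.norm_eq_abs, Real.norm_eq_abs]
      exact mul_le_mul_of_nonneg_left (pow_le_pow_left₀ (abs_nonneg _) (h9 y) k) (abs_nonneg _)
    · filter_upwards with y
      exact (summable_geometric_of_lt_one (abs_nonneg _) hct).mul_left _
    · exact integrable_const _
    · filter_upwards with y
      exact (hasSum_geometric_of_abs_lt_one (lt_of_le_of_lt (h9 y) hct)).mul_left _
  rw [hmint]
  have := iteratedDeriv_of_hasSum hsum n
  obtain ⟨k, rfl⟩ : ∃ k, n = k + 1 := ⟨n - 1, by omega⟩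
  exact this

end
end
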